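/- Let Ω ⊂ ℝ²×ℝ be a bounded open set. There exists a constant β > 0 such that for every z₀ = (b₀,w₀,v₀,M₀,q₀) ∈ X₀ there exists a sequence z_k = (b_k,w_k,v_k,M_k,q_k) ∈ X₀ such that for every k: ‖v_k‖²_{L²(Ω)} + ‖b_k‖²_{L²(Ω)} ≥ ‖v₀‖²_{L²(Ω)} + ‖b₀‖²_{L²(Ω)} + β (2|Ω| − (‖v₀‖²_{L²(Ω)} + ‖b₀‖²_{L²(Ω)}))², and z_k ⇀* z₀ in L^∞, i.e., ∫ z_k · g dx dt → ∫ z₀ · g dx dt for every g ∈ L¹(ℝ²×ℝ; ℝ⁸). -/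

import Mathlib

/-!
The proof is by convex integration in the style of De Lellis and Székelyhidi.

* Geometry (`exists_segment`). The difference of any two points of `K`, completed by zero pressure,
  lies in the wave cone of the linear system: two unit vectors are `c ξ ± σ ξ^⊥`, with `ξ` bisecting
  them, and `c` is then the wave speed. Writing `z ∈ 𝒰` as a Carathéodory combination of at most
  eight points of `K` and moving mass between two of them gives a segment centred at `z`, contained
  in `𝒰`, in a wave cone direction whose `(v, b)` part is at least a constant times the deficit
  `2 − |v|² − b²`.

* Localization (`op_linSys`, `op_pot_est`). For each such direction a homogeneous second order
  operator maps scalar potentials to exact solutions of the linear system. Applied to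
  `−n⁻² χ sin (n (ξ · x − c t))` it yields a solution supported in the support of `χ` that differs
  from `χ sin (n (ξ · x − c t))` times the direction by `O(1/n)`.

* Averages (`weak_lim`, `energy_lim`). By the Riemann–Lebesgue lemma such waves tend weakly to zero,
  and add in the limit half of their squared amplitude to the energy.

* Gluing (`exists_cover`, `exists_family`). On finitely many disjoint small cubes, given by the
  Besicovitch covering theorem and carrying half of the integral of the squared deficit, a wave
  adapted to the centre of the cube is added. The gain in energy is at least `2⁻¹⁸` times the
  integral of the squared deficit, and the Cauchy–Schwarz inequality turns this into the square of
  the integral of the deficit.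
-/

open MeasureTheory Filter Topology

noncomputable section

/-- The constraint set `K ⊂ ℝ × ℝ² × ℝ² × 𝕊₀² ≅ ℝ⁷`, a state being flattened as
`h = (b, w₁, w₂, v₁, v₂, M₁₁, M₁₂)` with `M = ![![M₁₁, M₁₂], ![M₁₂, −M₁₁]] ∈ 𝕊₀²`:
`|b| = 1`, `|v| = 1`, `M = v ⊗ v − (1/2) I₂`, `w = b v`. -/
def K7 : Set (Fin 7 → ℝ) :=
  {h | |h 0| = 1 ∧ (h 3) ^ 2 + (h 4) ^ 2 = 1 ∧
    h 5 = (h 3) ^ 2 - 1 / 2 ∧ h 6 = h 3 * h 4 ∧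
    h 1 = h 0 * h 3 ∧ h 2 = h 0 * h 4}

/-- The relaxed set `𝒰 = int (K^co × [−1,1]) ⊂ ℝ⁸`. -/
def U8 : Set (Fin 8 → ℝ) :=
  interior {z | (fun i : Fin 7 => z i.castSucc) ∈ convexHull ℝ K7 ∧
    z 7 ∈ Set.Icc (-1 : ℝ) 1}

/-- Spatial partial derivative (`j = 0, 1`) on `ℝ²ₓ × ℝₜ`. -/
noncomputable def pdx (j : Fin 2) (g : (Fin 2 → ℝ) × ℝ → ℝ) (y : (Fin 2 → ℝ) × ℝ) : ℝ :=
  fderiv ℝ g y (Pi.single j 1, (0 : ℝ))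

/-- Time derivative on `ℝ²ₓ × ℝₜ`. -/
noncomputable def pdt (g : (Fin 2 → ℝ) × ℝ → ℝ) (y : (Fin 2 → ℝ) × ℝ) : ℝ :=
  fderiv ℝ g y ((0 : Fin 2 → ℝ), (1 : ℝ))

/-- The set `X₀` of smooth states `z = (b, w, v, M, q) : ℝ²×ℝ → ℝ⁸` (flattened, with
`b = z 0`, `w = (z 1, z 2)`, `v = (z 3, z 4)`, `M = ![![z 5, z 6], ![z 6, −z 5]]`,
`q = z 7`), supported in `Ω`, solving the linear system `∂ₜ v + div M + ∇q = 0`,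
`div v = 0`, `∂ₜ b + div w = 0` pointwise, and taking values in `𝒰`. -/
def X0 (Ω : Set ((Fin 2 → ℝ) × ℝ)) : Set (((Fin 2 → ℝ) × ℝ) → Fin 8 → ℝ) :=
  {z | ContDiff ℝ (⊤ : ℕ∞) z ∧ tsupport z ⊆ Ω ∧ (∀ y, z y ∈ U8) ∧
    (∀ y, pdt (fun y' => z y' 3) y + pdx 0 (fun y' => z y' 5) y
        + pdx 1 (fun y' => z y' 6) y + pdx 0 (fun y' => z y' 7) y = 0) ∧
    (∀ y, pdt (fun y' => z y' 4) y + pdx 0 (fun y' => z y' 6) y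
        + pdx 1 (fun y' => -z y' 5) y + pdx 1 (fun y' => z y' 7) y = 0) ∧
    (∀ y, pdx 0 (fun y' => z y' 3) y + pdx 1 (fun y' => z y' 4) y = 0) ∧
    (∀ y, pdt (fun y' => z y' 0) y + pdx 0 (fun y' => z y' 1) y
        + pdx 1 (fun y' => z y' 2) y = 0)}

/-! ### Geometry of the relaxed set -/

/-- The flattened hull `K^co × [−1,1] ⊂ ℝ⁸` whose interior is `U8`. -/
def hull8 : Set (Fin 8 → ℝ) :=
  {z | (fun i : Fin 7 => z i.castSucc) ∈ convexHull ℝ K7 ∧ z 7 ∈ Set.Icc (-1 : ℝ) 1}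

lemma U8_eq : U8 = interior hull8 := rfl

lemma convex_hull8 : Convex ℝ hull8 := by
  intro x hx y hy a b ha hb hab
  refine ⟨?_, ?_⟩
  · exact (convex_convexHull ℝ K7) hx.1 hy.1 ha hb hab
  · exact (convex_Icc (-1 : ℝ) 1) hx.2 hy.2 ha hb hab

/-- Parameters of a plane wave with phase `ξ · x − c t`, where `ξ = (x1, x2)`: the amplitudes are
`s` for the velocity, `m` for the part of `w` orthogonal to `ξ`, and `a` for `b`. -/
structure Wave where
  x1 : ℝ
  x2 : ℝ
  c : ℝ
  s : ℝ
  m : ℝ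
  a : ℝ

/-- The direction in state space along which the plane wave oscillates. When `|ξ| = 1` it
lies in the wave cone of the linear system, with vanishing pressure component. -/
def Wave.dir (p : Wave) : Fin 8 → ℝ :=
  ![p.a, p.c * p.a * p.x1 + p.m * p.x2, p.c * p.a * p.x2 - p.m * p.x1,
    p.s * p.x2, -(p.s * p.x1), 2 * p.c * p.s * p.x1 * p.x2,
    p.c * p.s * (p.x2 ^ 2 - p.x1 ^ 2), 0]

lemma exists_angle (v1 v2 : ℝ) (h : v1 ^ 2 + v2 ^ 2 = 1) :
    ∃ α : ℝ, v1 = Real.cos α ∧ v2 = Real.sin α := by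
  have hn : ‖(⟨v1, v2⟩ : ℂ)‖ = 1 := by
    rw [Complex.norm_def, Complex.normSq_mk, ← sq, ← sq, h, Real.sqrt_one]
  refine ⟨Complex.arg ⟨v1, v2⟩, ?_, ?_⟩
  · have := Complex.norm_mul_cos_arg ⟨v1, v2⟩
    rw [hn] at this; simpa using this.symm
  · have := Complex.norm_mul_sin_arg ⟨v1, v2⟩
    rw [hn] at this; simpa using this.symm

/-- Two unit vectors are `c ξ ± σ ξ^⊥` with `ξ` the bisecting unit vector. -/
lemma exists_bisector (v1 v2 u1 u2 : ℝ) (hv : v1 ^ 2 + v2 ^ 2 = 1) (hu : u1 ^ 2 + u2 ^ 2 = 1) :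
    ∃ x1 x2 c σ : ℝ, x1 ^ 2 + x2 ^ 2 = 1 ∧ v1 = c * x1 + σ * x2 ∧ v2 = c * x2 - σ * x1 ∧
      u1 = c * x1 - σ * x2 ∧ u2 = c * x2 + σ * x1 := by
  obtain ⟨α, rfl, rfl⟩ := exists_angle v1 v2 hv
  obtain ⟨γ, rfl, rfl⟩ := exists_angle u1 u2 hu
  refine ⟨Real.cos ((γ + α) / 2), Real.sin ((γ + α) / 2), Real.cos ((γ - α) / 2),
    Real.sin ((γ - α) / 2), by simp, ?_, ?_, ?_, ?_⟩
  · rw [show α = (γ + α) / 2 - (γ - α) / 2 by ring, Real.cos_sub]; ring_nf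
  · rw [show α = (γ + α) / 2 - (γ - α) / 2 by ring, Real.sin_sub]; ring_nf
  · rw [show γ = (γ + α) / 2 + (γ - α) / 2 by ring, Real.cos_add]; ring_nf
  · rw [show γ = (γ + α) / 2 + (γ - α) / 2 by ring, Real.sin_add]; ring_nf

/-- The difference of two points of `K`, with zero pressure, lies in the wave cone. -/
lemma exists_wave_of_mem_K7 (h k : Fin 7 → ℝ) (hh : h ∈ K7) (hk : k ∈ K7) (l : ℝ) :
    ∃ p : Wave, p.x1 ^ 2 + p.x2 ^ 2 = 1 ∧
      (∀ i : Fin 7, p.dir i.castSucc = l * (h i - k i)) ∧ p.dir 7 = 0 := by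
  obtain ⟨-, hv, h5, h6, h1, h2⟩ := hh
  obtain ⟨-, ku, k5, k6, k1, k2⟩ := hk
  obtain ⟨x1, x2, c, σ, hx, e1, e2, e3, e4⟩ := exists_bisector _ _ _ _ hv ku
  refine ⟨⟨x1, x2, c, l * (2 * σ), l * ((h 0 + k 0) * σ), l * (h 0 - k 0)⟩, hx, ?_, rfl⟩
  intro i
  fin_cases i
  · rfl
  · show _ = l * (h 1 - k 1)
    rw [h1, k1, e1, e3]; simp [Wave.dir]; ring
  · show _ = l * (h 2 - k 2)
    rw [h2, k2, e2, e4]; simp [Wave.dir]; ring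
  · show _ = l * (h 3 - k 3)
    rw [e1, e3]; simp [Wave.dir]; ring
  · show _ = l * (h 4 - k 4)
    rw [e2, e4]; simp [Wave.dir]; ring
  · show _ = l * (h 5 - k 5)
    rw [h5, k5, e1, e3]; simp [Wave.dir]; ring
  · show _ = l * (h 6 - k 6)
    rw [h6, k6, e1, e2, e3, e4]; simp [Wave.dir]; ring

lemma K7_energy {h : Fin 7 → ℝ} (hh : h ∈ K7) : h 3 ^ 2 + h 4 ^ 2 + h 0 ^ 2 = 2 := by
  have := sq_abs (h 0)
  rw [hh.1] at this
  linarith [hh.2.1]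

lemma hull_energy_le {h : Fin 7 → ℝ} (hh : h ∈ convexHull ℝ K7) :
    h 3 ^ 2 + h 4 ^ 2 + h 0 ^ 2 ≤ 2 := by
  have hconv : Convex ℝ {h : Fin 7 → ℝ | h 3 ^ 2 + h 4 ^ 2 + h 0 ^ 2 ≤ 2} := by
    intro x hx y hy a b ha hb hab
    simp only [Set.mem_ofPred_eq, Pi.add_apply, Pi.smul_apply, smul_eq_mul] at hx hy ⊢
    obtain rfl : b = 1 - a := by linarith
    nlinarith [mul_nonneg (mul_nonneg ha hb) (sq_nonneg (x 3 - y 3)),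
      mul_nonneg (mul_nonneg ha hb) (sq_nonneg (x 4 - y 4)),
      mul_nonneg (mul_nonneg ha hb) (sq_nonneg (x 0 - y 0)),
      mul_le_mul_of_nonneg_left hx ha, mul_le_mul_of_nonneg_left hy hb]
  exact convexHull_min (fun x hx => (K7_energy hx).le) hconv hh

lemma U8_energy_lt {z : Fin 8 → ℝ} (hz : z ∈ U8) : z 3 ^ 2 + z 4 ^ 2 + z 0 ^ 2 < 2 := by
  -- slightly dilating `z` stays in the hull, where the energy is at most `2`
  have hcont : Tendsto (fun t : ℝ => t • z) (𝓝[>] 1) (𝓝 z) := by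
    have : Tendsto (fun t : ℝ => t • z) (𝓝 1) (𝓝 ((1 : ℝ) • z)) :=
      (continuous_id.smul continuous_const).tendsto 1
    rw [one_smul] at this
    exact this.mono_left nhdsWithin_le_nhds
  have hmem : ∀ᶠ t : ℝ in 𝓝[>] 1, t • z ∈ hull8 := hcont (mem_interior_iff_mem_nhds.1 hz)
  obtain ⟨t, ht, ht1⟩ := (hmem.and self_mem_nhdsWithin).exists
  have h := hull_energy_le ht.1
  have ht1 : 1 < t := ht1
  have h' : t ^ 2 * (z 3 ^ 2 + z 4 ^ 2 + z 0 ^ 2) ≤ 2 := by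
    have : (t * z 3) ^ 2 + (t * z 4) ^ 2 + (t * z 0) ^ 2 ≤ 2 := h
    linarith
  by_contra hcon
  push Not at hcon
  nlinarith

lemma cauchy_three (A B C X Y Z : ℝ) :
    (A * X + B * Y + C * Z) ^ 2 ≤ (A ^ 2 + B ^ 2 + C ^ 2) * (X ^ 2 + Y ^ 2 + Z ^ 2) := by
  linarith [sq_nonneg (A * Y - B * X), sq_nonneg (A * Z - C * X), sq_nonneg (B * Z - C * Y)]

/-- Every point of `U8` is the centre of a segment in a wave direction contained in `U8`, whose
energy is controlled from below by the energy deficit of the point. The point is written as a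
convex combination of at most eight points of `K`, and mass is moved between the vertex of largest
weight and another well chosen one. -/
lemma exists_segment {z : Fin 8 → ℝ} (hz : z ∈ U8) :
    ∃ p : Wave, p.x1 ^ 2 + p.x2 ^ 2 = 1 ∧
      (∀ τ ∈ Set.Icc (-1 : ℝ) 1, z + τ • p.dir ∈ U8) ∧
      (2 - (z 3 ^ 2 + z 4 ^ 2 + z 0 ^ 2)) ^ 2 / 2048 ≤
        p.dir 3 ^ 2 + p.dir 4 ^ 2 + p.dir 0 ^ 2 := by
  have hz8 : z ∈ hull8 := interior_subset hz
  obtain ⟨ι, hι, P, l, hP, haff, hlpos, hl1, hsum⟩ := eq_pos_convex_span_of_mem_convexHull hz8.1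
  have hcard : Fintype.card ι ≤ 8 := by
    refine haff.card_le_finrank_succ.trans ?_
    have := Submodule.finrank_le (vectorSpan ℝ (Set.range P))
    simp only [Module.finrank_fintype_fun_eq_card, Fintype.card_fin] at this
    omega
  have hPK : ∀ i, P i ∈ K7 := fun i => hP ⟨i, rfl⟩
  have hne : Nonempty ι := by
    by_contra h
    rw [not_nonempty_iff] at h
    simp at hl1
  obtain ⟨i₀, hi₀⟩ := Finite.exists_max l
  have hcoord : ∀ k : Fin 7, z k.castSucc = ∑ i, l i * P i k := by
    intro k
    have := congrFun hsum k
    simpa [Finset.sum_apply] using this.symm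
  set e : ℝ := 2 - (z 3 ^ 2 + z 4 ^ 2 + z 0 ^ 2) with he
  have he0 : 0 < e := by have := U8_energy_lt hz; linarith
  have h3 : z 3 = ∑ i, l i * P i 3 := hcoord 3
  have h4 : z 4 = ∑ i, l i * P i 4 := hcoord 4
  have h0 : z 0 = ∑ i, l i * P i 0 := hcoord 0
  -- the deficit is a weighted sum of inner products against `P i₀ + z`, and Carathéodory bounds
  -- the number of terms by 8
  set T : ι → ℝ := fun j => l j * ((P i₀ 3 - P j 3) * (P i₀ 3 + z 3)
      + (P i₀ 4 - P j 4) * (P i₀ 4 + z 4) + (P i₀ 0 - P j 0) * (P i₀ 0 + z 0)) with hT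
  have key : ∑ j, T j = e := by
    have e1 : ∀ j, T j = l j * (P i₀ 3 * (P i₀ 3 + z 3) + P i₀ 4 * (P i₀ 4 + z 4)
        + P i₀ 0 * (P i₀ 0 + z 0)) - ((l j * P j 3) * (P i₀ 3 + z 3)
        + (l j * P j 4) * (P i₀ 4 + z 4) + (l j * P j 0) * (P i₀ 0 + z 0)) := by
      intro j; simp only [hT]; ring
    simp only [e1, Finset.sum_sub_distrib, Finset.sum_add_distrib, ← Finset.sum_mul, hl1, ← h3,
      ← h4, ← h0]
    have := K7_energy (hPK i₀)
    rw [he]; linear_combination this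
  obtain ⟨j, hj⟩ : ∃ j, e / 8 ≤ T j := by
    by_contra hcon
    push Not at hcon
    have h1 : ∑ j, T j < ∑ _j : ι, e / 8 :=
      Finset.sum_lt_sum_of_nonempty Finset.univ_nonempty (fun j _ => hcon j)
    rw [key, Finset.sum_const, nsmul_eq_mul, Finset.card_univ] at h1
    have : (Fintype.card ι : ℝ) ≤ 8 := by exact_mod_cast hcard
    nlinarith
  obtain ⟨p, hp1, hpd, hp7⟩ := exists_wave_of_mem_K7 (P j) (P i₀) (hPK j) (hPK i₀) (l j / 2)
  refine ⟨p, hp1, ?_, ?_⟩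
  · intro τ hτ
    -- `z + 2 τ dir` shifts mass between the `j`-th and the `i₀`-th vertices
    have hmem : z + (2 * τ) • p.dir ∈ hull8 := by
      refine ⟨?_, ?_⟩
      · classical
        have hfun : (fun k : Fin 7 => (z + (2 * τ) • p.dir) k.castSucc) =
            ∑ i, (l i + (if i = j then τ * l j else 0) - (if i = i₀ then τ * l j else 0)) • P i := by
          ext k
          simp only [Pi.add_apply, Pi.smul_apply, smul_eq_mul, hpd, hcoord, Finset.sum_apply,
            sub_mul, add_mul, ite_mul, zero_mul, Finset.sum_add_distrib, Finset.sum_sub_distrib,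
            Finset.sum_ite_eq', Finset.mem_univ, if_true]
          ring
        rw [hfun]
        refine (convex_convexHull ℝ K7).sum_mem ?_ ?_ (fun i _ => subset_convexHull ℝ K7 (hPK i))
        · intro i _
          have a1 := hi₀ j
          have a2 := (hlpos j).le
          have a3 := (hlpos i).le
          obtain ⟨t1, t2⟩ := hτ
          by_cases c1 : i = j <;> by_cases c2 : i = i₀
          · rw [if_pos c1, if_pos c2]; linarith
          · rw [if_pos c1, if_neg c2, c1]; nlinarith
          · rw [if_neg c1, if_pos c2, c2]; nlinarith
          · rw [if_neg c1, if_neg c2]; linarith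
        · simp [Finset.sum_add_distrib, Finset.sum_sub_distrib, hl1]
      · have : (z + (2 * τ) • p.dir) 7 = z 7 := by simp [hp7]
        rw [this]; exact hz8.2
    have := convex_hull8.combo_interior_self_mem_interior hz hmem
      (a := 1 / 2) (b := 1 / 2) (by norm_num) (by norm_num) (by norm_num)
    rw [U8_eq]
    convert this using 1
    ext k; simp; ring
  · have d3 : p.dir 3 = l j / 2 * (P j 3 - P i₀ 3) := hpd 3
    have d4 : p.dir 4 = l j / 2 * (P j 4 - P i₀ 4) := hpd 4
    have d0 : p.dir 0 = l j / 2 * (P j 0 - P i₀ 0) := hpd 0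
    have hen := K7_energy (hPK i₀)
    have hz2 := U8_energy_lt hz
    have hTd : T j = -2 * (p.dir 3 * (P i₀ 3 + z 3) + p.dir 4 * (P i₀ 4 + z 4)
        + p.dir 0 * (P i₀ 0 + z 0)) := by
      rw [d3, d4, d0]; simp only [hT]; ring
    have hA : 0 ≤ p.dir 3 ^ 2 + p.dir 4 ^ 2 + p.dir 0 ^ 2 := by positivity
    have hT2 : (e / 8) ^ 2 ≤ T j ^ 2 := pow_le_pow_left₀ (by positivity) hj 2
    have hXYZ : (P i₀ 3 + z 3) ^ 2 + (P i₀ 4 + z 4) ^ 2 + (P i₀ 0 + z 0) ^ 2 ≤ 8 := by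
      linarith [sq_nonneg (P i₀ 3 - z 3), sq_nonneg (P i₀ 4 - z 4), sq_nonneg (P i₀ 0 - z 0)]
    have hcs := cauchy_three (p.dir 3) (p.dir 4) (p.dir 0) (P i₀ 3 + z 3) (P i₀ 4 + z 4)
      (P i₀ 0 + z 0)
    have h8 := mul_le_mul_of_nonneg_left hXYZ hA
    rw [hTd, mul_pow] at hT2
    linarith

/-! ### Compactly supported solutions from a potential -/

/-- The space-time `ℝ²ₓ × ℝₜ`, with the sup norm. -/
abbrev E3 := (Fin 2 → ℝ) × ℝ

/-- Directional derivative. -/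
def dd (a : E3) (f : E3 → ℝ) (y : E3) : ℝ := fderiv ℝ f y a

/-- First spatial direction. -/
def eX : E3 := (Pi.single 0 1, 0)
/-- Second spatial direction. -/
def eY : E3 := (Pi.single 1 1, 0)
/-- Time direction. -/
def eT : E3 := (0, 1)

lemma pdx0_eq (f : E3 → ℝ) : pdx 0 f = dd eX f := rfl
lemma pdx1_eq (f : E3 → ℝ) : pdx 1 f = dd eY f := rfl
lemma pdt_eq (f : E3 → ℝ) : pdt f = dd eT f := rfl

lemma dd_smooth (a : E3) {f : E3 → ℝ} (hf : ContDiff ℝ (⊤ : ℕ∞) f) :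
    ContDiff ℝ (⊤ : ℕ∞) (dd a f) := by
  have : ContDiff ℝ (⊤ : ℕ∞) (fderiv ℝ f) := hf.fderiv_right (by norm_cast)
  exact this.clm_apply contDiff_const

lemma smooth_diff {f : E3 → ℝ} (hf : ContDiff ℝ (⊤ : ℕ∞) f) : Differentiable ℝ f :=
  hf.differentiable (by simp)

lemma dd_comm (a b : E3) {f : E3 → ℝ} (hf : ContDiff ℝ (⊤ : ℕ∞) f) :
    dd a (dd b f) = dd b (dd a f) := by
  funext y
  have hd : DifferentiableAt ℝ (fderiv ℝ f) y :=
    ((hf.fderiv_right (m := (⊤ : ℕ∞)) (by norm_cast)).differentiable (by simp)) y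
  have h2 : ∀ u v : E3, dd u (dd v f) y = fderiv ℝ (fderiv ℝ f) y u v := by
    intro u v
    show fderiv ℝ (fun x => fderiv ℝ f x v) y u = _
    rw [fderiv_clm_apply hd (differentiableAt_const v)]
    simp
  rw [h2, h2]
  have hs : IsSymmSndFDerivAt ℝ f y := by
    apply (hf.contDiffAt).isSymmSndFDerivAt
    simp [minSmoothness_of_isRCLikeNormedField]
    exact (WithTop.coe_le_coe.2 le_top : ((2 : ℕ∞) : WithTop ℕ∞) ≤ ((⊤ : ℕ∞) : WithTop ℕ∞))
  exact hs a b

lemma dd_zero_off (a : E3) {f : E3 → ℝ} {C : Set E3} (hC : IsClosed C)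
    (hf : ∀ y, y ∉ C → f y = 0) : ∀ y, y ∉ C → dd a f y = 0 := by
  intro y hy
  have : f =ᶠ[𝓝 y] fun _ => 0 := by
    filter_upwards [hC.isOpen_compl.mem_nhds hy] with x hx using hf x hx
  rw [dd, this.fderiv_eq]; simp

/-- The second derivatives `xx, xy, yy, xt, yt` of a potential. -/
def hess (f : E3 → ℝ) : Fin 5 → E3 → ℝ :=
  ![dd eX (dd eX f), dd eX (dd eY f), dd eY (dd eY f), dd eT (dd eX f), dd eT (dd eY f)]

/-- Coefficients, in terms of `hess`, of the second order operator sending a scalar potential to a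
solution of the linear system. With `∂_ξ` the derivative along `ξ`, the operator comes from the
stream function `s ∂_ξ Φ` for `v`, and from `b = a ∂_ξ² Φ`, `w = −a ξ ∂_t ∂_ξ Φ + m ∇^⊥ ∂_ξ Φ`. -/
def Wave.coef (p : Wave) : Fin 8 → Fin 5 → ℝ :=
  ![![p.a * p.x1 ^ 2, 2 * p.a * p.x1 * p.x2, p.a * p.x2 ^ 2, 0, 0],
    ![0, p.m * p.x1, p.m * p.x2, -(p.a * p.x1 ^ 2), -(p.a * p.x1 * p.x2)],
    ![-(p.m * p.x1), -(p.m * p.x2), 0, -(p.a * p.x1 * p.x2), -(p.a * p.x2 ^ 2)],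
    ![0, p.s * p.x1, p.s * p.x2, 0, 0],
    ![-(p.s * p.x1), -(p.s * p.x2), 0, 0, 0],
    ![0, 0, 0, -(p.s * p.x2), -(p.s * p.x1)],
    ![0, 0, 0, p.s * p.x1, -(p.s * p.x2)],
    ![0, 0, 0, p.s * p.x2, -(p.s * p.x1)]]

/-- The solution of the linear system generated by the potential `f`. -/
def Wave.op (p : Wave) (f : E3 → ℝ) (y : E3) : Fin 8 → ℝ :=
  fun i => ∑ k, p.coef i k * hess f k y

/-- The linear system, for a vector valued map on space-time. -/
def LinSys (z : E3 → Fin 8 → ℝ) : Prop :=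
  (∀ y, pdt (fun y' => z y' 3) y + pdx 0 (fun y' => z y' 5) y
        + pdx 1 (fun y' => z y' 6) y + pdx 0 (fun y' => z y' 7) y = 0) ∧
    (∀ y, pdt (fun y' => z y' 4) y + pdx 0 (fun y' => z y' 6) y
        + pdx 1 (fun y' => -z y' 5) y + pdx 1 (fun y' => z y' 7) y = 0) ∧
    (∀ y, pdx 0 (fun y' => z y' 3) y + pdx 1 (fun y' => z y' 4) y = 0) ∧
    (∀ y, pdt (fun y' => z y' 0) y + pdx 0 (fun y' => z y' 1) y
        + pdx 1 (fun y' => z y' 2) y = 0)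

lemma hess_smooth {f : E3 → ℝ} (hf : ContDiff ℝ (⊤ : ℕ∞) f) (k : Fin 5) :
    ContDiff ℝ (⊤ : ℕ∞) (hess f k) := by
  fin_cases k <;> exact dd_smooth _ (dd_smooth _ hf)

lemma hess_zero_off {f : E3 → ℝ} {C : Set E3} (hC : IsClosed C)
    (hf : ∀ y, y ∉ C → f y = 0) (k : Fin 5) : ∀ y, y ∉ C → hess f k y = 0 := by
  fin_cases k <;> exact dd_zero_off _ hC (dd_zero_off _ hC hf)

lemma op_smooth (p : Wave) {f : E3 → ℝ} (hf : ContDiff ℝ (⊤ : ℕ∞) f) :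
    ContDiff ℝ (⊤ : ℕ∞) (p.op f) := by
  rw [contDiff_pi]
  intro i
  exact ContDiff.sum fun k _ => contDiff_const.mul (hess_smooth hf k)

lemma op_zero_off (p : Wave) {f : E3 → ℝ} {C : Set E3} (hC : IsClosed C)
    (hf : ∀ y, y ∉ C → f y = 0) : ∀ y, y ∉ C → p.op f y = 0 := by
  intro y hy
  funext i
  simp [Wave.op, hess_zero_off hC hf _ y hy]

lemma dd_op (p : Wave) {f : E3 → ℝ} (hf : ContDiff ℝ (⊤ : ℕ∞) f) (a : E3) (i : Fin 8) (y : E3) :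
    dd a (fun y' => p.op f y' i) y = ∑ k, p.coef i k * dd a (hess f k) y := by
  have hd : ∀ k, DifferentiableAt ℝ (hess f k) y := fun k => smooth_diff (hess_smooth hf k) y
  show fderiv ℝ (fun y' => ∑ k, p.coef i k * hess f k y') y a = _
  rw [fderiv_fun_sum (fun k _ => (hd k).const_mul _)]
  rw [_root_.sum_apply]
  refine Finset.sum_congr rfl fun k _ => ?_
  rw [fderiv_const_mul (hd k)]
  rfl

lemma dd_neg (a : E3) (f : E3 → ℝ) (y : E3) : dd a (fun y' => -f y') y = -dd a f y := by
  simp [dd, fderiv_fun_neg]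

lemma op_linSys (p : Wave) {f : E3 → ℝ} (hf : ContDiff ℝ (⊤ : ℕ∞) f) : LinSys (p.op f) := by
  have hX := dd_smooth eX hf
  have hY := dd_smooth eY hf
  have c1 : dd eX (dd eT (dd eX f)) = dd eT (dd eX (dd eX f)) := dd_comm _ _ hX
  have c2 : dd eX (dd eT (dd eY f)) = dd eT (dd eX (dd eY f)) := dd_comm _ _ hY
  have c3 : dd eY (dd eT (dd eX f)) = dd eT (dd eX (dd eY f)) := by
    rw [dd_comm _ _ hX, dd_comm eY eX hf]
  have c4 : dd eY (dd eT (dd eY f)) = dd eT (dd eY (dd eY f)) := dd_comm _ _ hY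
  have c5 : dd eY (dd eX (dd eX f)) = dd eX (dd eX (dd eY f)) := by
    rw [dd_comm _ _ hX, dd_comm eY eX hf]
  have c6 : dd eY (dd eX (dd eY f)) = dd eX (dd eY (dd eY f)) := dd_comm _ _ hY
  refine ⟨fun y => ?_, fun y => ?_, fun y => ?_, fun y => ?_⟩ <;>
  · simp only [pdx0_eq, pdx1_eq, pdt_eq, dd_neg, dd_op p hf]
    simp [Fin.sum_univ_five, Wave.coef, hess, c1, c2, c3, c4, c5, c6]
    ring

lemma LinSys.add {z w : E3 → Fin 8 → ℝ} (hz : LinSys z) (hw : LinSys w)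
    (sz : ContDiff ℝ (⊤ : ℕ∞) z) (sw : ContDiff ℝ (⊤ : ℕ∞) w) :
    LinSys (fun y => z y + w y) := by
  have h : ∀ (a : E3) (i : Fin 8) (y : E3), dd a (fun y' => (z y' + w y') i) y
      = dd a (fun y' => z y' i) y + dd a (fun y' => w y' i) y := by
    intro a i y
    have h1 := smooth_diff (contDiff_pi.1 sz i) y
    have h2 := smooth_diff (contDiff_pi.1 sw i) y
    show fderiv ℝ (fun y' => z y' i + w y' i) y a = _
    rw [fderiv_fun_add h1 h2]; rfl
  obtain ⟨a1, a2, a3, a4⟩ := hz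
  obtain ⟨b1, b2, b3, b4⟩ := hw
  simp only [pdx0_eq, pdx1_eq, pdt_eq, dd_neg] at a1 a2 a3 a4 b1 b2 b3 b4
  refine ⟨fun y => ?_, fun y => ?_, fun y => ?_, fun y => ?_⟩ <;>
    simp only [pdx0_eq, pdx1_eq, pdt_eq, dd_neg, h]
  · linear_combination a1 y + b1 y
  · linear_combination a2 y + b2 y
  · linear_combination a3 y + b3 y
  · linear_combination a4 y + b4 y

lemma linSys_zero : LinSys (fun _ => 0) := by
  refine ⟨fun y => ?_, fun y => ?_, fun y => ?_, fun y => ?_⟩ <;> simp [pdx, pdt]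

lemma linSys_sum {ι : Type*} (F : Finset ι) (w : ι → E3 → Fin 8 → ℝ)
    (hw : ∀ j ∈ F, LinSys (w j)) (sw : ∀ j ∈ F, ContDiff ℝ (⊤ : ℕ∞) (w j)) :
    LinSys (fun y => ∑ j ∈ F, w j y) := by
  classical
  induction F using Finset.induction_on with
  | empty => simpa using linSys_zero
  | insert j F hj ih =>
    simp only [Finset.sum_insert hj]
    refine LinSys.add (hw j (by simp)) (ih (fun k hk => hw k (by simp [hk]))
      (fun k hk => sw k (by simp [hk]))) (sw j (by simp)) ?_
    exact ContDiff.sum fun k hk => sw k (by simp [hk])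

/-! ### Asymptotics of localized plane waves -/

/-- The phase `ξ · x − c t`. -/
def Wave.phase (p : Wave) : E3 →L[ℝ] ℝ :=
  p.x1 • ((ContinuousLinearMap.proj 0).comp (ContinuousLinearMap.fst ℝ (Fin 2 → ℝ) ℝ)) +
    p.x2 • ((ContinuousLinearMap.proj 1).comp (ContinuousLinearMap.fst ℝ (Fin 2 → ℝ) ℝ)) -
    p.c • ContinuousLinearMap.snd ℝ (Fin 2 → ℝ) ℝ

lemma phase_eX (p : Wave) : p.phase eX = p.x1 := by simp [Wave.phase, eX]
lemma phase_eY (p : Wave) : p.phase eY = p.x2 := by simp [Wave.phase, eY]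
lemma phase_eT (p : Wave) : p.phase eT = -p.c := by simp [Wave.phase, eT]

lemma phase_ne_zero (p : Wave) (hp : p.x1 ^ 2 + p.x2 ^ 2 = 1) : p.phase ≠ 0 := by
  intro h
  have h1 := phase_eX p
  have h2 := phase_eY p
  rw [h] at h1 h2
  simp at h1 h2
  rw [← h1, ← h2] at hp
  norm_num at hp

/-- The potential `−n⁻² χ sin (n θ)`, whose second derivatives are `χ sin (n θ) θ_a θ_b` up to
`O(1/n)`. -/
def pot (χ : E3 → ℝ) (θ : E3 →L[ℝ] ℝ) (n : ℝ) (y : E3) : ℝ :=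
  χ y * (-(n⁻¹ ^ 2 * Real.sin (n * θ y)))

lemma pot_smooth {χ : E3 → ℝ} (hχ : ContDiff ℝ (⊤ : ℕ∞) χ) (θ : E3 →L[ℝ] ℝ) (n : ℝ) :
    ContDiff ℝ (⊤ : ℕ∞) (pot χ θ n) := by
  unfold pot
  have := θ.contDiff (n := (⊤ : ℕ∞))
  fun_prop

lemma dd_pot {χ : E3 → ℝ} (hχ : ContDiff ℝ (⊤ : ℕ∞) χ) (θ : E3 →L[ℝ] ℝ) {n : ℝ} (hn : n ≠ 0)
    (b : E3) : dd b (pot χ θ n) = fun y => dd b χ y * (-(n⁻¹ ^ 2 * Real.sin (n * θ y)))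
      + χ y * (-(n⁻¹ * θ b * Real.cos (n * θ y))) := by
  funext y
  have h1 := (smooth_diff hχ y).hasFDerivAt
  have h2 : HasFDerivAt (fun y => n * θ y) (n • (θ : E3 →L[ℝ] ℝ)) y :=
    θ.hasFDerivAt.const_mul n
  have h3 := ((h2.sin.const_mul (n⁻¹ ^ 2)).neg)
  have h4 := h1.mul h3
  have h5 : fderiv ℝ (pot χ θ n) y = _ := h4.fderiv
  rw [dd, h5]
  simp [dd]
  field_simp
  ring

lemma dd_dd_pot {χ : E3 → ℝ} (hχ : ContDiff ℝ (⊤ : ℕ∞) χ) (θ : E3 →L[ℝ] ℝ) {n : ℝ} (hn : n ≠ 0)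
    (a b : E3) (y : E3) : dd a (dd b (pot χ θ n)) y =
      dd a (dd b χ) y * (-(n⁻¹ ^ 2 * Real.sin (n * θ y)))
      + dd b χ y * (-(n⁻¹ * θ a * Real.cos (n * θ y)))
      + dd a χ y * (-(n⁻¹ * θ b * Real.cos (n * θ y)))
      + χ y * (θ a * θ b * Real.sin (n * θ y)) := by
  rw [dd_pot hχ θ hn]
  have h1 := (smooth_diff (dd_smooth b hχ) y).hasFDerivAt
  have h1' := (smooth_diff hχ y).hasFDerivAt
  have h2 : HasFDerivAt (fun y => n * θ y) (n • (θ : E3 →L[ℝ] ℝ)) y :=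
    θ.hasFDerivAt.const_mul n
  have h3 := ((h2.sin.const_mul (n⁻¹ ^ 2)).neg)
  have h3' := ((h2.cos.const_mul (n⁻¹ * θ b)).neg)
  have h5 := ((h1.mul h3).add (h1'.mul h3')).fderiv
  rw [dd]
  refine (congrArg (fun L : E3 →L[ℝ] ℝ => L a) h5).trans ?_
  simp [dd]
  field_simp
  ring

lemma dd_bounded (a : E3) {f : E3 → ℝ} (hf : ContDiff ℝ (⊤ : ℕ∞) f) {C : Set E3}
    (hC : IsCompact C) (hfC : ∀ y, y ∉ C → f y = 0) : ∃ B : ℝ, 0 ≤ B ∧ ∀ y, |dd a f y| ≤ B := by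
  have hcs : HasCompactSupport (dd a f) :=
    HasCompactSupport.intro hC (dd_zero_off a hC.isClosed hfC)
  obtain ⟨B, hB⟩ := hcs.exists_bound_of_continuous (dd_smooth a hf).continuous
  exact ⟨B, (norm_nonneg _).trans (hB 0), hB⟩

lemma hess_pot_est {χ : E3 → ℝ} (hχ : ContDiff ℝ (⊤ : ℕ∞) χ) {C : Set E3} (hC : IsCompact C)
    (hχC : ∀ y, y ∉ C → χ y = 0) (θ : E3 →L[ℝ] ℝ) (a b : E3) :
    ∃ B : ℝ, 0 ≤ B ∧ ∀ n : ℝ, 1 ≤ n → ∀ y, |dd a (dd b (pot χ θ n)) y -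
      χ y * Real.sin (n * θ y) * (θ a * θ b)| ≤ B * n⁻¹ := by
  obtain ⟨B1, hB1, h1⟩ := dd_bounded a (dd_smooth b hχ) hC (dd_zero_off b hC.isClosed hχC)
  obtain ⟨B2, hB2, h2⟩ := dd_bounded b hχ hC hχC
  obtain ⟨B3, hB3, h3⟩ := dd_bounded a hχ hC hχC
  refine ⟨B1 + B2 * |θ a| + B3 * |θ b|, by positivity, fun n hn y => ?_⟩
  have hn0 : 0 < n := by linarith
  have hi : n⁻¹ ≤ 1 := inv_le_one_of_one_le₀ hn
  have hip : 0 < n⁻¹ := inv_pos.2 hn0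
  rw [dd_dd_pot hχ θ hn0.ne']
  have e1 : |dd a (dd b χ) y * (-(n⁻¹ ^ 2 * Real.sin (n * θ y)))| ≤ B1 * n⁻¹ := by
    rw [abs_mul, abs_neg, abs_mul, abs_of_pos (pow_pos hip 2)]
    have := Real.abs_sin_le_one (n * θ y)
    refine mul_le_mul (h1 y) ?_ (by positivity) hB1
    calc n⁻¹ ^ 2 * |Real.sin (n * θ y)| ≤ n⁻¹ ^ 2 * 1 := by gcongr
      _ = n⁻¹ * n⁻¹ := by ring
      _ ≤ n⁻¹ * 1 := by gcongr
      _ = n⁻¹ := mul_one _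
  have e2 : ∀ (D t B : ℝ), 0 ≤ B → |D| ≤ B →
      |D * (-(n⁻¹ * t * Real.cos (n * θ y)))| ≤ B * |t| * n⁻¹ := by
    intro D t B hB hD
    rw [abs_mul, abs_neg, abs_mul, abs_mul, abs_of_pos hip]
    have := Real.abs_cos_le_one (n * θ y)
    calc |D| * (n⁻¹ * |t| * |Real.cos (n * θ y)|) ≤ B * (n⁻¹ * |t| * 1) := by gcongr
      _ = B * |t| * n⁻¹ := by ring
  have e3 := e2 _ (θ a) _ hB2 (h2 y)
  have e4 := e2 _ (θ b) _ hB3 (h3 y)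
  calc _ = |dd a (dd b χ) y * (-(n⁻¹ ^ 2 * Real.sin (n * θ y)))
      + dd b χ y * (-(n⁻¹ * θ a * Real.cos (n * θ y)))
      + dd a χ y * (-(n⁻¹ * θ b * Real.cos (n * θ y)))| := by congr 1; ring
    _ ≤ _ := abs_add_three _ _ _
    _ ≤ B1 * n⁻¹ + B2 * |θ a| * n⁻¹ + B3 * |θ b| * n⁻¹ := by gcongr
    _ = _ := by ring

/-- The products of phase derivatives matching `hess`. -/
def Wave.sym (p : Wave) : Fin 5 → ℝ :=
  ![p.x1 * p.x1, p.x1 * p.x2, p.x2 * p.x2, -p.c * p.x1, -p.c * p.x2]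

lemma coef_sym (p : Wave) (hp : p.x1 ^ 2 + p.x2 ^ 2 = 1) (i : Fin 8) :
    ∑ k, p.coef i k * p.sym k = p.dir i := by
  have h2 : p.x2 ^ 2 = 1 - p.x1 ^ 2 := by linarith
  rw [Fin.sum_univ_five]
  fin_cases i <;> simp [Wave.coef, Wave.sym, Wave.dir]
  · linear_combination p.a * (p.x1 ^ 2 + p.x2 ^ 2 + 1) * hp
  · linear_combination (p.c * p.a * p.x1 + p.m * p.x2) * hp
  · linear_combination (p.c * p.a * p.x2 - p.m * p.x1) * hp
  · linear_combination p.s * p.x2 * hp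
  · linear_combination -p.s * p.x1 * hp
  · ring
  · ring
  · ring

/-- A localized plane wave agrees with its leading part up to `O(1/n)`. -/
lemma op_pot_est (p : Wave) (hp : p.x1 ^ 2 + p.x2 ^ 2 = 1) {χ : E3 → ℝ}
    (hχ : ContDiff ℝ (⊤ : ℕ∞) χ) {C : Set E3} (hC : IsCompact C) (hχC : ∀ y, y ∉ C → χ y = 0) :
    ∃ B : ℝ, 0 ≤ B ∧ ∀ n : ℝ, 1 ≤ n → ∀ y i, |p.op (pot χ p.phase n) y i -
      χ y * Real.sin (n * p.phase y) * p.dir i| ≤ B * n⁻¹ := by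
  have hk : ∀ k : Fin 5, ∃ B : ℝ, 0 ≤ B ∧ ∀ n : ℝ, 1 ≤ n → ∀ y,
      |hess (pot χ p.phase n) k y - χ y * Real.sin (n * p.phase y) * p.sym k| ≤ B * n⁻¹ := by
    intro k
    have h := hess_pot_est hχ hC hχC p.phase
    fin_cases k
    · simpa [hess, Wave.sym, phase_eX, phase_eY, phase_eT] using h eX eX
    · simpa [hess, Wave.sym, phase_eX, phase_eY, phase_eT] using h eX eY
    · simpa [hess, Wave.sym, phase_eX, phase_eY, phase_eT] using h eY eY
    · simpa [hess, Wave.sym, phase_eX, phase_eY, phase_eT] using h eT eX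
    · simpa [hess, Wave.sym, phase_eX, phase_eY, phase_eT] using h eT eY
  choose B hB0 hB using hk
  refine ⟨∑ i, ∑ k, |p.coef i k| * B k, Finset.sum_nonneg fun i _ => Finset.sum_nonneg fun k _ =>
    mul_nonneg (abs_nonneg _) (hB0 k), fun n hn y i => ?_⟩
  have hn0 : 0 ≤ n⁻¹ := inv_nonneg.2 (by linarith)
  rw [← coef_sym p hp i, Wave.op, Finset.mul_sum, ← Finset.sum_sub_distrib]
  calc _ ≤ ∑ k, |p.coef i k * hess (pot χ p.phase n) k y -
        χ y * Real.sin (n * p.phase y) * (p.coef i k * p.sym k)| :=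
        Finset.abs_sum_le_sum_abs _ _
    _ ≤ ∑ k, |p.coef i k| * B k * n⁻¹ := by
        refine Finset.sum_le_sum fun k _ => ?_
        rw [show p.coef i k * hess (pot χ p.phase n) k y -
          χ y * Real.sin (n * p.phase y) * (p.coef i k * p.sym k) = p.coef i k *
          (hess (pot χ p.phase n) k y - χ y * Real.sin (n * p.phase y) * p.sym k) by ring,
          abs_mul, mul_assoc |p.coef i k|]
        exact mul_le_mul_of_nonneg_left (hB k n hn y) (abs_nonneg _)
    _ = (∑ k, |p.coef i k| * B k) * n⁻¹ := by rw [Finset.sum_mul]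
    _ ≤ _ := by
        refine mul_le_mul_of_nonneg_right ?_ hn0
        exact Finset.single_le_sum (f := fun i => ∑ k, |p.coef i k| * B k)
          (fun i _ => Finset.sum_nonneg fun k _ => mul_nonneg (abs_nonneg _) (hB0 k))
          (Finset.mem_univ i)

/-! ### Oscillatory integrals -/

instance isAddHaar_E3 : (volume : Measure E3).IsAddHaarMeasure :=
  inferInstanceAs ((volume : Measure (Fin 2 → ℝ)).prod (volume : Measure ℝ)).IsAddHaarMeasure

lemma tendsto_dual_cocompact {θ : E3 →L[ℝ] ℝ} (hθ : θ ≠ 0) :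
    Tendsto (fun t : ℝ => (t / (2 * Real.pi)) • θ) atTop (cocompact (StrongDual ℝ E3)) := by
  rw [← Metric.cobounded_eq_cocompact, ← tendsto_norm_atTop_iff_cobounded]
  have : ∀ t : ℝ, ‖(t / (2 * Real.pi)) • θ‖ = |t| * (‖θ‖ / (2 * Real.pi)) := by
    intro t
    rw [norm_smul, Real.norm_eq_abs, abs_div, abs_of_pos Real.two_pi_pos]; ring
  simp only [this]
  exact tendsto_abs_atTop_atTop.atTop_mul_const
    (div_pos (norm_pos_iff.2 hθ) Real.two_pi_pos)

/-- Riemann–Lebesgue along a ray of frequencies. -/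
lemma riemann_lebesgue {θ : E3 →L[ℝ] ℝ} (hθ : θ ≠ 0) {f : E3 → ℝ} (hf : Integrable f) :
    Tendsto (fun t : ℝ => ∫ y, f y * Real.sin (t * θ y)) atTop (𝓝 0) ∧
    Tendsto (fun t : ℝ => ∫ y, f y * Real.cos (t * θ y)) atTop (𝓝 0) := by
  have h := (tendsto_integral_exp_smul_cocompact (V := E3) (fun y => (f y : ℂ)) volume).comp
    (tendsto_dual_cocompact hθ)
  have hval : ∀ (t : ℝ) (y : E3), (Real.fourierChar (-(((t / (2 * Real.pi)) • θ) y))) • (f y : ℂ)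
      = ((f y * Real.cos (t * θ y) : ℝ) : ℂ) + ((-(f y * Real.sin (t * θ y)) : ℝ) : ℂ) * Complex.I := by
    intro t y
    rw [Circle.smul_def, Real.fourierChar_apply]
    have : (2 * Real.pi * -(((t / (2 * Real.pi)) • θ) y)) = -(t * θ y) := by
      simp only [smul_apply, smul_eq_mul]
      field_simp
    rw [this, Complex.exp_mul_I]
    simp only [smul_eq_mul]
    push_cast
    simp only [Complex.cos_neg, Complex.sin_neg]
    ring
  have hsqint : ∀ t : ℝ, Integrable (fun y : E3 =>
      (Real.fourierChar (-(((t / (2 * Real.pi)) • θ) y))) • (f y : ℂ)) := by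
    intro t
    have hc : Integrable (fun y => (f y : ℂ)) := hf.ofReal
    refine hc.norm.mono' ?_ (ae_of_all _ fun y => ?_)
    · have : Continuous fun y : E3 => Real.fourierChar (-(((t / (2 * Real.pi)) • θ) y)) :=
        Real.continuous_fourierChar.comp (((t / (2 * Real.pi)) • θ).continuous.neg)
      exact this.aestronglyMeasurable.smul hc.aestronglyMeasurable
    · rw [Circle.norm_smul]
  have hre : ∀ t : ℝ, (∫ y : E3, (Real.fourierChar (-(((t / (2 * Real.pi)) • θ) y))) • (f y : ℂ)).re
      = ∫ y, f y * Real.cos (t * θ y) := by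
    intro t
    have := integral_re (hsqint t)
    rw [← RCLike.re_eq_complex_re, ← this]
    refine integral_congr_ae (ae_of_all _ fun y => ?_)
    simp only [hval]
    generalize f y * Real.cos (t * θ y) = A
    generalize -(f y * Real.sin (t * θ y)) = A'
    simp
  have him : ∀ t : ℝ, (∫ y : E3, (Real.fourierChar (-(((t / (2 * Real.pi)) • θ) y))) • (f y : ℂ)).im
      = -∫ y, f y * Real.sin (t * θ y) := by
    intro t
    have := integral_im (hsqint t)
    rw [← RCLike.im_eq_complex_im, ← this, ← integral_neg]
    refine integral_congr_ae (ae_of_all _ fun y => ?_)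
    simp only [hval]
    generalize f y * Real.cos (t * θ y) = A
    generalize -(f y * Real.sin (t * θ y)) = A'
    simp
  constructor
  · have h1 := ((Complex.continuous_im.tendsto 0).comp h).neg
    refine (h1.congr fun t => ?_).trans (by simp)
    show -(∫ y : E3, (Real.fourierChar (-(((t / (2 * Real.pi)) • θ) y))) • (f y : ℂ)).im = _
    rw [him, neg_neg]
  · have h1 := ((Complex.continuous_re.tendsto 0).comp h)
    refine (h1.congr fun t => ?_).trans (by simp)
    exact hre t

lemma riemann_lebesgue_on {θ : E3 →L[ℝ] ℝ} (hθ : θ ≠ 0) {Ω : Set E3} (hΩ : MeasurableSet Ω)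
    {f : E3 → ℝ} (hf : IntegrableOn f Ω) :
    Tendsto (fun t : ℝ => ∫ y in Ω, f y * Real.sin (t * θ y)) atTop (𝓝 0) ∧
    Tendsto (fun t : ℝ => ∫ y in Ω, f y * Real.cos (t * θ y)) atTop (𝓝 0) := by
  have h := riemann_lebesgue hθ ((integrable_indicator_iff hΩ).2 hf)
  have key : ∀ g : E3 → ℝ, ∫ y in Ω, f y * g y = ∫ y, Ω.indicator f y * g y := by
    intro g
    rw [← integral_indicator hΩ]
    congr 1
    funext y
    by_cases hy : y ∈ Ω <;> simp [hy]
  simp only [key]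
  exact h

/-- The leading part of a finite sum of localized plane waves (one component). -/
def lead {ι : Type*} (F : Finset ι) (χ : ι → E3 → ℝ) (θ : ι → E3 →L[ℝ] ℝ) (d : ι → ℝ) (n : ℝ)
    (y : E3) : ℝ := ∑ j ∈ F, χ j y * Real.sin (n * θ j y) * d j

section osc

variable {ι : Type*} {F : Finset ι} {χ : ι → E3 → ℝ} {θ : ι → E3 →L[ℝ] ℝ} {d : ι → ℝ}

lemma lead_continuous (hχ : ∀ j, Continuous (χ j)) (n : ℝ) : Continuous (lead F χ θ d n) := by
  unfold lead
  have := fun j => (θ j).continuous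
  fun_prop

lemma lead_bound (hχ1 : ∀ j y, |χ j y| ≤ 1) (n : ℝ) (y : E3) :
    |lead F χ θ d n y| ≤ ∑ j ∈ F, |d j| := by
  refine (Finset.abs_sum_le_sum_abs _ _).trans (Finset.sum_le_sum fun j _ => ?_)
  rw [abs_mul, abs_mul]
  have h1 := hχ1 j y
  have h2 := Real.abs_sin_le_one (n * θ j y)
  calc _ ≤ 1 * 1 * |d j| := by gcongr
    _ = _ := by ring

lemma tendsto_const_mul_inv (B : ℝ) : Tendsto (fun n : ℝ => B * n⁻¹) atTop (𝓝 0) := by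
  simpa using tendsto_inv_atTop_zero.const_mul B

/-- Oscillations converge weakly to zero, an `O(1/n)` error included. -/
lemma weak_lim (hχ : ∀ j, Continuous (χ j)) (hχ1 : ∀ j y, |χ j y| ≤ 1) (hθ : ∀ j ∈ F, θ j ≠ 0)
    {u : ℝ → E3 → ℝ} (hu : ∀ n, Continuous (u n)) {B : ℝ}
    (hB : ∀ n, 1 ≤ n → ∀ y, |u n y - lead F χ θ d n y| ≤ B * n⁻¹)
    {g : E3 → ℝ} (hg : Integrable g) :
    Tendsto (fun n => ∫ y, u n y * g y) atTop (𝓝 0) := by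
  have hterm : ∀ (n : ℝ) (j : ι), Integrable (fun y => g y * χ j y) := fun n j =>
    hg.mul_bdd (c := 1) (hχ j).aestronglyMeasurable (ae_of_all _ (hχ1 j))
  have hterm2 : ∀ (n : ℝ) (j : ι),
      Integrable (fun y => g y * χ j y * Real.sin (n * θ j y)) := fun n j =>
    (hterm n j).mul_bdd (c := 1)
      (Real.continuous_sin.comp (continuous_const.mul (θ j).continuous)).aestronglyMeasurable
      (ae_of_all _ fun y => Real.abs_sin_le_one _)
  have hlead : Tendsto (fun n => ∫ y, g y * lead F χ θ d n y) atTop (𝓝 0) := by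
    have heq : ∀ n, ∫ y, g y * lead F χ θ d n y =
        ∑ j ∈ F, d j * ∫ y, g y * χ j y * Real.sin (n * θ j y) := by
      intro n
      simp only [← integral_const_mul]
      rw [← integral_finsetSum _ (fun j _ => (hterm2 n j).const_mul (d j))]
      congr 1; funext y
      rw [lead, Finset.mul_sum]
      exact Finset.sum_congr rfl fun j _ => by ring
    simp only [heq]
    have : Tendsto (fun n => ∑ j ∈ F, d j * ∫ y, g y * χ j y * Real.sin (n * θ j y)) atTop
        (𝓝 (∑ j ∈ F, d j * 0)) :=
      tendsto_finsetSum _ fun j hj => ((riemann_lebesgue (hθ j hj) (hterm 0 j)).1).const_mul _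
    simpa using this
  have hlint : ∀ n, Integrable (fun y => g y * lead F χ θ d n y) := fun n =>
    hg.mul_bdd (lead_continuous hχ n).aestronglyMeasurable (ae_of_all _ (lead_bound hχ1 n))
  have hrint : ∀ n, 1 ≤ n → Integrable (fun y => g y * (u n y - lead F χ θ d n y)) := fun n hn =>
    hg.mul_bdd ((hu n).sub (lead_continuous hχ n)).aestronglyMeasurable (ae_of_all _ (hB n hn))
  have hrem : Tendsto (fun n => ∫ y, g y * (u n y - lead F χ θ d n y)) atTop (𝓝 0) := by
    refine squeeze_zero_norm' ?_ (tendsto_const_mul_inv (B * ∫ y, ‖g y‖))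
    filter_upwards [eventually_ge_atTop 1] with n hn
    calc _ ≤ ∫ y, ‖g y‖ * (B * n⁻¹) := by
          refine norm_integral_le_of_norm_le (hg.norm.mul_const _) (ae_of_all _ fun y => ?_)
          rw [norm_mul]
          exact mul_le_mul_of_nonneg_left (hB n hn y) (norm_nonneg _)
      _ = _ := by rw [integral_mul_const]; ring
  have := hlead.add hrem
  rw [add_zero] at this
  refine this.congr' ?_
  filter_upwards [eventually_ge_atTop 1] with n hn
  rw [← integral_add (hlint n) (hrint n hn)]
  congr 1; funext y; ring

lemma integrableOn_of_bdd {Ω : Set E3} (hfin : volume Ω < ⊤) {f : E3 → ℝ} (hf : Continuous f)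
    {M : ℝ} (hM : ∀ y, |f y| ≤ M) : IntegrableOn f Ω := by
  have : IsFiniteMeasure (volume.restrict Ω) := ⟨by simpa using hfin⟩
  exact Integrable.of_bound hf.aestronglyMeasurable M (ae_of_all _ hM)

lemma lead_sq (hdisj : ∀ i ∈ F, ∀ j ∈ F, i ≠ j → ∀ y, χ i y * χ j y = 0) (n : ℝ) (y : E3) :
    lead F χ θ d n y ^ 2 = ∑ j ∈ F, (d j ^ 2 / 2 * χ j y ^ 2
      - d j ^ 2 / 2 * (χ j y ^ 2 * Real.cos (2 * n * θ j y))) := by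
  rw [sq, lead, Finset.sum_mul_sum]
  refine Finset.sum_congr rfl fun i hi => ?_
  rw [Finset.sum_eq_single_of_mem i hi]
  · rw [show 2 * n * θ i y = 2 * (n * θ i y) by ring, Real.cos_two_mul]
    have := Real.sin_sq_add_cos_sq (n * θ i y)
    linear_combination (χ i y ^ 2 * d i ^ 2) * this
  · intro j hj hji
    have := hdisj i hi j hj hji.symm y
    linear_combination (Real.sin (n * θ i y) * d i * Real.sin (n * θ j y) * d j) * this

/-- In the limit `n → ∞`, disjointly supported oscillations add half of their squared amplitude to
the energy: the cross terms vanish and `sin²` averages to `1/2`. -/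
lemma energy_lim {Ω : Set E3} (hΩ : MeasurableSet Ω) (hfin : volume Ω < ⊤)
    (hχ : ∀ j, Continuous (χ j)) (hχ1 : ∀ j y, |χ j y| ≤ 1) (hθ : ∀ j ∈ F, θ j ≠ 0)
    (hdisj : ∀ i ∈ F, ∀ j ∈ F, i ≠ j → ∀ y, χ i y * χ j y = 0)
    {u : ℝ → E3 → ℝ} (hu : ∀ n, Continuous (u n)) {B : ℝ}
    (hB : ∀ n, 1 ≤ n → ∀ y, |u n y - lead F χ θ d n y| ≤ B * n⁻¹)
    {f : E3 → ℝ} (hf : Continuous f) {M : ℝ} (hM : ∀ y, |f y| ≤ M) :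
    Tendsto (fun n => ∫ y in Ω, (f y + u n y) ^ 2) atTop
      (𝓝 ((∫ y in Ω, f y ^ 2) + ∑ j ∈ F, d j ^ 2 / 2 * ∫ y in Ω, χ j y ^ 2)) := by
  have hM0 : 0 ≤ M := (abs_nonneg _).trans (hM 0)
  have hB0 : 0 ≤ B := by
    have := (abs_nonneg _).trans (hB 1 le_rfl 0)
    simpa using this
  set D := ∑ j ∈ F, |d j|
  have hD0 : 0 ≤ D := Finset.sum_nonneg fun j _ => abs_nonneg _
  have hPc : ∀ n, Continuous (lead F χ θ d n) := lead_continuous hχ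
  have hPb : ∀ n y, |lead F χ θ d n y| ≤ D := lead_bound hχ1
  have hI1 : IntegrableOn (fun y => f y ^ 2) Ω :=
    integrableOn_of_bdd hfin (hf.pow 2) (M := M ^ 2) fun y => by
      rw [abs_pow]; exact pow_le_pow_left₀ (abs_nonneg _) (hM y) 2
  have hfχ : ∀ j, IntegrableOn (fun y => f y * χ j y) Ω := fun j =>
    integrableOn_of_bdd hfin (hf.mul (hχ j)) (M := M * 1) fun y => by
      rw [abs_mul]; exact mul_le_mul (hM y) (hχ1 j y) (abs_nonneg _) hM0
  have hfχs : ∀ n j, IntegrableOn (fun y => f y * χ j y * Real.sin (n * θ j y)) Ω := fun n j =>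
    Integrable.mul_bdd (c := 1) (hfχ j)
      (Real.continuous_sin.comp (continuous_const.mul (θ j).continuous)).aestronglyMeasurable
      (ae_of_all _ fun y => Real.abs_sin_le_one _)
  have hχ2 : ∀ j, IntegrableOn (fun y => χ j y ^ 2) Ω := fun j =>
    integrableOn_of_bdd hfin ((hχ j).pow 2) (M := 1 ^ 2) fun y => by
      rw [abs_pow]; exact pow_le_pow_left₀ (abs_nonneg _) (hχ1 j y) 2
  have hχ2c : ∀ n j, IntegrableOn (fun y => χ j y ^ 2 * Real.cos (2 * n * θ j y)) Ω := fun n j =>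
    Integrable.mul_bdd (c := 1) (hχ2 j)
      (Real.continuous_cos.comp (continuous_const.mul (θ j).continuous)).aestronglyMeasurable
      (ae_of_all _ fun y => Real.abs_cos_le_one _)
  have hcross : ∀ n, IntegrableOn (fun y => ∑ j ∈ F, 2 * d j * (f y * χ j y * Real.sin (n * θ j y)))
      Ω := fun n => integrable_finsetSum _ fun j _ => (hfχs n j).const_mul _
  have hsq : ∀ n, IntegrableOn (fun y => ∑ j ∈ F, (d j ^ 2 / 2 * χ j y ^ 2
      - d j ^ 2 / 2 * (χ j y ^ 2 * Real.cos (2 * n * θ j y)))) Ω := fun n =>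
    integrable_finsetSum _ fun j _ => ((hχ2 j).const_mul _).sub ((hχ2c n j).const_mul _)
  have hsqj : ∀ n, ∀ j ∈ F, IntegrableOn (fun y => d j ^ 2 / 2 * χ j y ^ 2
      - d j ^ 2 / 2 * (χ j y ^ 2 * Real.cos (2 * n * θ j y))) Ω := fun n j _ =>
    ((hχ2 j).const_mul _).sub ((hχ2c n j).const_mul _)
  have hexp : ∀ n y, (f y + lead F χ θ d n y) ^ 2 = f y ^ 2 +
      (∑ j ∈ F, 2 * d j * (f y * χ j y * Real.sin (n * θ j y))) +
      ∑ j ∈ F, (d j ^ 2 / 2 * χ j y ^ 2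
      - d j ^ 2 / 2 * (χ j y ^ 2 * Real.cos (2 * n * θ j y))) := by
    intro n y
    rw [← lead_sq hdisj]
    have : ∑ j ∈ F, 2 * d j * (f y * χ j y * Real.sin (n * θ j y)) =
        2 * f y * lead F χ θ d n y := by
      rw [lead, Finset.mul_sum]; exact Finset.sum_congr rfl fun j _ => by ring
    rw [this]; ring
  have hint1 : ∀ n, ∫ y in Ω, (f y + lead F χ θ d n y) ^ 2 = (∫ y in Ω, f y ^ 2) +
      (∑ j ∈ F, 2 * d j * ∫ y in Ω, f y * χ j y * Real.sin (n * θ j y)) +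
      ∑ j ∈ F, (d j ^ 2 / 2 * (∫ y in Ω, χ j y ^ 2)
        - d j ^ 2 / 2 * ∫ y in Ω, χ j y ^ 2 * Real.cos (2 * n * θ j y)) := by
    intro n
    simp only [hexp]
    have hadd : IntegrableOn (fun y => f y ^ 2 +
        ∑ j ∈ F, 2 * d j * (f y * χ j y * Real.sin (n * θ j y))) Ω := hI1.add (hcross n)
    rw [integral_add hadd (hsq n), integral_add hI1 (hcross n),
      integral_finsetSum _ (fun j _ => (hfχs n j).const_mul _),
      integral_finsetSum F (hsqj n)]
    simp only [integral_const_mul]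
    congr 1
    refine Finset.sum_congr rfl fun j _ => ?_
    rw [integral_sub ((hχ2 j).const_mul _) ((hχ2c n j).const_mul _)]
    simp only [integral_const_mul]
  have hlim1 : Tendsto (fun n => ∫ y in Ω, (f y + lead F χ θ d n y) ^ 2) atTop
      (𝓝 ((∫ y in Ω, f y ^ 2) + ∑ j ∈ F, d j ^ 2 / 2 * ∫ y in Ω, χ j y ^ 2)) := by
    simp only [hint1]
    have t1 : Tendsto (fun n => ∑ j ∈ F, 2 * d j * ∫ y in Ω, f y * χ j y * Real.sin (n * θ j y))
        atTop (𝓝 (∑ j ∈ F, 2 * d j * 0)) :=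
      tendsto_finsetSum _ fun j hj => (riemann_lebesgue_on (hθ j hj) hΩ (hfχ j)).1.const_mul _
    have t2 : Tendsto (fun n : ℝ => ∑ j ∈ F, (d j ^ 2 / 2 * (∫ y in Ω, χ j y ^ 2)
        - d j ^ 2 / 2 * ∫ y in Ω, χ j y ^ 2 * Real.cos (2 * n * θ j y)))
        atTop (𝓝 (∑ j ∈ F, (d j ^ 2 / 2 * (∫ y in Ω, χ j y ^ 2) - d j ^ 2 / 2 * 0))) :=
      tendsto_finsetSum _ fun j hj => tendsto_const_nhds.sub
        ((((riemann_lebesgue_on (hθ j hj) hΩ (hχ2 j)).2).comp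
          (tendsto_id.const_mul_atTop (two_pos : (0 : ℝ) < 2))).const_mul _)
    have := (t1.const_add (∫ y in Ω, f y ^ 2)).add t2
    simpa using this
  have hIP : ∀ n, IntegrableOn (fun y => (f y + lead F χ θ d n y) ^ 2) Ω := fun n => by
    refine integrableOn_of_bdd hfin ((hf.add (hPc n)).pow 2) (M := (M + D) ^ 2) fun y => ?_
    rw [abs_pow]
    exact pow_le_pow_left₀ (abs_nonneg _) ((abs_add_le _ _).trans (add_le_add (hM y) (hPb n y))) 2
  have hdiffb : ∀ n, 1 ≤ n → ∀ y, |(f y + u n y) ^ 2 - (f y + lead F χ θ d n y) ^ 2|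
      ≤ (2 * M + 2 * D + B) * (B * n⁻¹) := by
    intro n hn y
    have h1 := hB n hn y
    have h2 : B * n⁻¹ ≤ B := mul_le_of_le_one_right hB0 (inv_le_one_of_one_le₀ hn)
    rw [show (f y + u n y) ^ 2 - (f y + lead F χ θ d n y) ^ 2 =
      (2 * f y + 2 * lead F χ θ d n y + (u n y - lead F χ θ d n y)) *
        (u n y - lead F χ θ d n y) by ring, abs_mul]
    refine mul_le_mul ?_ h1 (abs_nonneg _) (by positivity)
    refine (abs_add_three _ _ _).trans ?_
    rw [abs_mul, abs_mul, abs_two]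
    have := hM y
    have := hPb n y
    linarith
  have hlim2 : Tendsto (fun n => ∫ y in Ω, ((f y + u n y) ^ 2 - (f y + lead F χ θ d n y) ^ 2))
      atTop (𝓝 0) := by
    refine squeeze_zero_norm' ?_
      (tendsto_const_mul_inv ((2 * M + 2 * D + B) * B * (volume.real Ω)))
    filter_upwards [eventually_ge_atTop 1] with n hn
    refine (norm_setIntegral_le_of_norm_le_const hfin (fun y _ => hdiffb n hn y)).trans
      (le_of_eq ?_)
    ring
  have := hlim1.add hlim2
  rw [add_zero] at this
  refine this.congr' ?_
  filter_upwards [eventually_ge_atTop 1] with n hn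
  have hID : IntegrableOn (fun y => (f y + u n y) ^ 2 - (f y + lead F χ θ d n y) ^ 2) Ω :=
    integrableOn_of_bdd hfin (((hf.add (hu n)).pow 2).sub ((hf.add (hPc n)).pow 2)) (hdiffb n hn)
  rw [← integral_add (hIP n) hID]
  congr 1; funext y; ring

end osc

/-! ### Local perturbations and covering -/

/-- A finite disjoint family of small cubes (balls of the sup norm) capturing at least half of the integral of `g`. -/
lemma exists_cover {Ω : Set E3} {g : E3 → ℝ}
    (hg : IntegrableOn g Ω) (hpos : 0 < ∫ y in Ω, g y) (R : E3 → ℝ)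
    (hR : ∀ x ∈ Ω, 0 < R x) (hsub : ∀ x ∈ Ω, Metric.closedBall x (R x) ⊆ Ω) :
    ∃ (F : Finset E3) (r : E3 → ℝ), (∀ x, 0 < r x) ∧ (∀ x ∈ F, x ∈ Ω ∧ r x ≤ R x) ∧
      (∀ x ∈ F, ∀ x' ∈ F, x ≠ x' →
        Disjoint (Metric.closedBall x (r x)) (Metric.closedBall x' (r x'))) ∧
      (∫ y in Ω, g y) / 2 < ∑ x ∈ F, ∫ y in Metric.closedBall x (r x), g y := by
  classical
  obtain ⟨t, r, ht, htΩ, hr, hcov, hdisj⟩ := Besicovitch.exists_disjoint_closedBall_covering_ae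
    (volume : Measure E3) (fun _ => Set.univ) Ω
    (fun x _ δ hδ => ⟨δ / 2, trivial, by positivity, by linarith⟩) R hR
  have : Countable t := ht.to_subtype
  have hUsub : (⋃ x : t, Metric.closedBall (x : E3) (r x)) ⊆ Ω := by
    refine Set.iUnion_subset fun x => ?_
    exact (Metric.closedBall_subset_closedBall (hr x x.2).2.2.le).trans (hsub x (htΩ x.2))
  have hae : (⋃ x : t, Metric.closedBall (x : E3) (r x)) =ᵐ[volume] Ω := by
    refine hUsub.eventuallyLE.antisymm ?_
    rw [ae_le_set]
    rw [← Set.biUnion_eq_iUnion t (fun x _ => Metric.closedBall x (r x))]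
    exact hcov
  have hs := hasSum_integral_iUnion (μ := volume) (f := g)
    (s := fun x : t => Metric.closedBall (x : E3) (r x))
    (fun x => Metric.isClosed_closedBall.measurableSet)
    (fun x x' hxx => hdisj x.2 x'.2 (fun h => hxx (Subtype.ext h))) (hg.mono_set hUsub)
  rw [setIntegral_congr_set hae] at hs
  have hev : ∀ᶠ G : Finset t in atTop, (∫ y in Ω, g y) / 2 <
      ∑ x ∈ G, ∫ y in Metric.closedBall (x : E3) (r x), g y :=
    hs.eventually (lt_mem_nhds (by linarith))
  obtain ⟨G, hG⟩ := hev.exists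
  refine ⟨G.map (Function.Embedding.subtype _), fun x => if x ∈ t then r x else 1, ?_, ?_, ?_, ?_⟩
  · intro x
    by_cases hx : x ∈ t
    · simpa [hx] using (hr x hx).2.1
    · simp [hx]
  · intro x hx
    simp only [Finset.mem_map, Function.Embedding.subtype_apply, Subtype.exists,
      exists_and_right, exists_eq_right] at hx
    obtain ⟨hx, -⟩ := hx
    simpa [hx] using ⟨htΩ hx, (hr x hx).2.2.le⟩
  · intro x hx x' hx' hne
    simp only [Finset.mem_map, Function.Embedding.subtype_apply, Subtype.exists,
      exists_and_right, exists_eq_right] at hx hx'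
    obtain ⟨hx, -⟩ := hx
    obtain ⟨hx', -⟩ := hx'
    simpa [hx, hx'] using hdisj hx hx' hne
  · simpa using hG

/-- The energy deficit `2 − |v|² − b²`. -/
def deficit (z : E3 → Fin 8 → ℝ) (y : E3) : ℝ := 2 - (z y 3 ^ 2 + z y 4 ^ 2 + z y 0 ^ 2)

/-- Near any point of `Ω` a single wave direction can be added safely. -/
lemma exists_local {Ω : Set E3} (hΩ : IsOpen Ω) {z : E3 → Fin 8 → ℝ} (hz : Continuous z)
    (hU : ∀ y, z y ∈ U8) (x : E3) (hx : x ∈ Ω) :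
    ∃ (p : Wave) (δ R : ℝ), p.x1 ^ 2 + p.x2 ^ 2 = 1 ∧ 0 < δ ∧ 0 < R ∧
      Metric.closedBall x R ⊆ Ω ∧
      (∀ y ∈ Metric.closedBall x R, deficit z y ≤ 2 * deficit z x) ∧
      (∀ y ∈ Metric.closedBall x R, ∀ τ ∈ Set.Icc (-1 : ℝ) 1, ∀ u : Fin 8 → ℝ,
        ‖u - τ • p.dir‖ < δ → z y + u ∈ U8) ∧
      deficit z x ^ 2 / 2048 ≤ p.dir 3 ^ 2 + p.dir 4 ^ 2 + p.dir 0 ^ 2 := by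
  obtain ⟨p, hp, hseg, hen⟩ := exists_segment (hU x)
  have hcomp : IsCompact ((fun τ : ℝ => z x + τ • p.dir) '' Set.Icc (-1 : ℝ) 1) :=
    isCompact_Icc.image (by fun_prop)
  obtain ⟨δ, hδ, hth⟩ := hcomp.exists_thickening_subset_open isOpen_interior
    (s := _) (t := U8) (by rintro _ ⟨τ, hτ, rfl⟩; exact hseg τ hτ)
  have hdc : Continuous (deficit z) := by
    unfold deficit
    have := fun i => (continuous_apply i).comp hz
    have h3 := this 3
    have h4 := this 4
    have h0 := this 0
    exact continuous_const.sub (((h3.pow 2).add (h4.pow 2)).add (h0.pow 2))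
  have hdpos : 0 < deficit z x := by have := U8_energy_lt (hU x); unfold deficit; linarith
  have e1 : ∀ᶠ y in 𝓝 x, y ∈ Ω := hΩ.mem_nhds hx
  have e2 : ∀ᶠ y in 𝓝 x, deficit z y < 2 * deficit z x :=
    hdc.continuousAt.eventually_lt_const (by linarith)
  have e3 : ∀ᶠ y in 𝓝 x, dist (z y) (z x) < δ / 2 :=
    hz.continuousAt.eventually (Metric.ball_mem_nhds _ (by positivity))
  obtain ⟨R, hR, hball⟩ := Metric.nhds_basis_closedBall.eventually_iff.1 (e1.and (e2.and e3))
  refine ⟨p, δ / 2, R, hp, by positivity, hR, fun y hy => (hball hy).1,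
    fun y hy => (hball hy).2.1.le, fun y hy τ hτ u hu => ?_, hen⟩
  apply hth
  rw [Metric.mem_thickening_iff]
  refine ⟨_, ⟨τ, hτ, rfl⟩, ?_⟩
  have h3 := (hball hy).2.2
  rw [dist_eq_norm] at h3 ⊢
  calc ‖z y + u - (z x + τ • p.dir)‖ = ‖(z y - z x) + (u - τ • p.dir)‖ := by congr 1; abel
    _ ≤ _ := norm_add_le _ _
    _ < δ := by linarith

/-- The bump function on the cube of centre `x` and radius `r`. -/
def bump (x : E3) (r : ℝ) (hr : 0 < r) : ContDiffBump x :=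
  ⟨r / 2, r, by positivity, by linarith⟩

lemma bump_sq_integral {Ω : Set E3} (hfin : volume Ω < ⊤) (x : E3) (r : ℝ) (hr : 0 < r)
    (hsub : Metric.closedBall x r ⊆ Ω) :
    volume.real (Metric.closedBall x r) / 8 ≤ ∫ y in Ω, bump x r hr y ^ 2 := by
  have hI : IntegrableOn (fun y => bump x r hr y ^ 2) Ω :=
    integrableOn_of_bdd hfin ((bump x r hr).continuous.pow 2) (M := 1) fun y => by
      rw [abs_pow, abs_of_nonneg (bump x r hr).nonneg]
      exact pow_le_one₀ (bump x r hr).nonneg (bump x r hr).le_one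
  have hs : Metric.closedBall x (r / 2) ⊆ Ω :=
    (Metric.closedBall_subset_closedBall (by linarith)).trans hsub
  have h1 : ∫ y in Metric.closedBall x (r / 2), bump x r hr y ^ 2 ≤
      ∫ y in Ω, bump x r hr y ^ 2 :=
    setIntegral_mono_set hI (ae_of_all _ fun y => sq_nonneg _) hs.eventuallyLE
  have h2 : ∫ y in Metric.closedBall x (r / 2), bump x r hr y ^ 2 =
      volume.real (Metric.closedBall x (r / 2)) := by
    rw [setIntegral_congr_fun (g := fun _ => (1 : ℝ)) Metric.isClosed_closedBall.measurableSet]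
    · simp
    · intro y hy
      have := (bump x r hr).one_of_mem_closedBall hy
      simp [this]
  rw [h2] at h1
  refine le_trans (le_of_eq ?_) h1
  rw [Measure.addHaar_real_closedBall _ _ hr.le,
    Measure.addHaar_real_closedBall _ _ (by positivity : (0 : ℝ) ≤ r / 2)]
  have : Module.finrank ℝ E3 = 3 := by simp
  rw [this]; ring

/-- The Cauchy–Schwarz inequality on `Ω`, with `|Ω| + 1` in place of `|Ω|` to avoid dividing by `0`. -/
lemma cauchy_integral {Ω : Set E3} (hfin : volume Ω < ⊤) {e : E3 → ℝ} (he : IntegrableOn e Ω)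
    (he2 : IntegrableOn (fun y => e y ^ 2) Ω) :
    (∫ y in Ω, e y) ^ 2 / (volume.real Ω + 1) ≤ ∫ y in Ω, e y ^ 2 := by
  set V := volume.real Ω with hV
  have hV0 : 0 ≤ V := measureReal_nonneg
  set I := ∫ y in Ω, e y with hI
  have hfm : IsFiniteMeasure (volume.restrict Ω) := ⟨by simpa using hfin⟩
  have key : 0 ≤ ∫ y in Ω, (e y - I / (V + 1)) ^ 2 := integral_nonneg fun y => sq_nonneg _
  have hexp : ∫ y in Ω, (e y - I / (V + 1)) ^ 2 =
      (∫ y in Ω, e y ^ 2) - 2 * (I / (V + 1)) * I + (I / (V + 1)) ^ 2 * V := by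
    have h1 : ∀ y, (e y - I / (V + 1)) ^ 2 =
        e y ^ 2 - 2 * (I / (V + 1)) * e y + (I / (V + 1)) ^ 2 := fun y => by ring
    simp only [h1]
    rw [integral_add, integral_sub, integral_const_mul]
    · rw [← hI]; simp [hV, mul_comm]
    · exact he2
    · exact he.const_mul _
    · exact he2.sub (he.const_mul _)
    · exact integrable_const _
  rw [hexp] at key
  have h2 : (I / (V + 1)) ^ 2 * V ≤ I ^ 2 / (V + 1) := by
    rw [div_pow, div_mul_eq_mul_div, div_le_div_iff₀ (by positivity) (by positivity)]
    nlinarith [mul_nonneg (sq_nonneg I) (by linarith : (0 : ℝ) ≤ V + 1)]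
  have h3 : 2 * (I / (V + 1)) * I = 2 * (I ^ 2 / (V + 1)) := by ring
  linarith

/-! ### Adding the oscillations -/

/-- The perturbation: a finite sum of localized plane waves of frequency `n`. -/
def waveSum (F : Finset E3) (p : E3 → Wave) (χ : E3 → E3 → ℝ) (n : ℝ) (y : E3) : Fin 8 → ℝ :=
  ∑ x ∈ F, (p x).op (pot (χ x) (p x).phase n) y

lemma waveSum_smooth (F : Finset E3) (p : E3 → Wave) {χ : E3 → E3 → ℝ}
    (hχ : ∀ x, ContDiff ℝ (⊤ : ℕ∞) (χ x)) (n : ℝ) :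
    ContDiff ℝ (⊤ : ℕ∞) (waveSum F p χ n) :=
  ContDiff.sum fun x _ => op_smooth (p x) (pot_smooth (hχ x) _ n)

lemma waveSum_linSys (F : Finset E3) (p : E3 → Wave) {χ : E3 → E3 → ℝ}
    (hχ : ∀ x, ContDiff ℝ (⊤ : ℕ∞) (χ x)) (n : ℝ) : LinSys (waveSum F p χ n) :=
  linSys_sum F _ (fun x _ => op_linSys (p x) (pot_smooth (hχ x) _ n))
    (fun x _ => op_smooth (p x) (pot_smooth (hχ x) _ n))

lemma op_pot_zero_off (p : Wave) {χ : E3 → ℝ} {C : Set E3} (hC : IsClosed C)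
    (hχC : ∀ y, y ∉ C → χ y = 0) (n : ℝ) (y : E3) (hy : y ∉ C) :
    p.op (pot χ p.phase n) y = 0 :=
  op_zero_off p hC (fun y hy => by simp [pot, hχC y hy]) y hy

/-- A map of `X₀` is bounded by a constant, its support being compact. -/
lemma X0_bounded {Ω : Set E3} (hb : Bornology.IsBounded Ω) {z : E3 → Fin 8 → ℝ}
    (hz : z ∈ X0 Ω) : ∃ M : ℝ, ∀ y i, |z y i| ≤ M := by
  have hcs : HasCompactSupport z :=
    Metric.isCompact_of_isClosed_isBounded (isClosed_tsupport z) (hb.subset hz.2.1)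
  obtain ⟨M, hM⟩ := hcs.exists_bound_of_continuous hz.1.continuous
  exact ⟨M, fun y i => (norm_le_pi_norm (z y) i).trans (hM y)⟩

lemma deficit_continuous {z : E3 → Fin 8 → ℝ} (hz : Continuous z) : Continuous (deficit z) := by
  have h := fun i => (continuous_apply i).comp hz
  exact continuous_const.sub ((((h 3).pow 2).add ((h 4).pow 2)).add ((h 0).pow 2))

lemma deficit_mem {z : E3 → Fin 8 → ℝ} (hU : ∀ y, z y ∈ U8) (y : E3) :
    0 < deficit z y ∧ deficit z y ≤ 2 := by
  have := U8_energy_lt (hU y)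
  unfold deficit
  constructor <;> nlinarith [sq_nonneg (z y 3), sq_nonneg (z y 4), sq_nonneg (z y 0)]

lemma integral_add_three {Ω : Set E3} {f g h : E3 → ℝ} (hf : IntegrableOn f Ω)
    (hg : IntegrableOn g Ω) (hh : IntegrableOn h Ω) :
    ∫ y in Ω, (f y + g y + h y) = (∫ y in Ω, f y) + (∫ y in Ω, g y) + ∫ y in Ω, h y := by
  rw [← integral_add hf hg]
  exact integral_add (hf.add hg) hh

/-- Every state of `X₀` whose deficit does not vanish is a weak limit of states of `X₀` obtained by
adding oscillations of frequency `n → ∞`, the energy gained in the limit being bounded below by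
the integral of the squared deficit. -/
lemma exists_family {Ω : Set E3} (hΩ : IsOpen Ω) (hb : Bornology.IsBounded Ω)
    {z : E3 → Fin 8 → ℝ} (hz : z ∈ X0 Ω) (hpos : 0 < ∫ y in Ω, deficit z y ^ 2) :
    ∃ (Z : ℝ → E3 → Fin 8 → ℝ) (G : ℝ), (∀ᶠ n in atTop, Z n ∈ X0 Ω) ∧
      (∫ y in Ω, deficit z y ^ 2) / 2 ^ 18 < G ∧
      Tendsto (fun n => ∫ y in Ω, (Z n y 3 ^ 2 + Z n y 4 ^ 2 + Z n y 0 ^ 2)) atTop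
        (𝓝 ((∫ y in Ω, (z y 3 ^ 2 + z y 4 ^ 2 + z y 0 ^ 2)) + G)) ∧
      ∀ g : E3 → Fin 8 → ℝ, Integrable g →
        Tendsto (fun n => ∫ y, ∑ i, Z n y i * g y i) atTop (𝓝 (∫ y, ∑ i, z y i * g y i)) := by
  classical
  have hfin : volume Ω < ⊤ := hb.measure_lt_top
  obtain ⟨M, hM⟩ := X0_bounded hb hz
  obtain ⟨hzs, hzsupp, hU, hlin⟩ := hz
  have hzc : Continuous z := hzs.continuous
  have hzi : ∀ i, Continuous (fun y => z y i) := fun i => (continuous_apply i).comp hzc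
  have hdc := deficit_continuous hzc
  have hd := deficit_mem hU
  have hdint : IntegrableOn (fun y => deficit z y ^ 2) Ω :=
    integrableOn_of_bdd hfin (hdc.pow 2) (M := 4) fun y => by
      rw [abs_of_nonneg (sq_nonneg _)]; nlinarith [(hd y).1, (hd y).2]
  have : Nonempty Wave := ⟨⟨0, 0, 0, 0, 0, 0⟩⟩
  have hloc := exists_local hΩ hzc hU
  choose! p δ R hp hδ hR hsub hdef hseg hen using hloc
  obtain ⟨F, r, hr, hF, hdisj, hcov⟩ := exists_cover hdint hpos R hR hsub
  set χ : E3 → E3 → ℝ := fun x => bump x (r x) (hr x) with hχdef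
  have hχs : ∀ x, ContDiff ℝ (⊤ : ℕ∞) (χ x) := fun x => (bump x (r x) (hr x)).contDiff
  have hχc : ∀ x, Continuous (χ x) := fun x => (hχs x).continuous
  have hχ0 : ∀ x y, 0 ≤ χ x y := fun x y => (bump x (r x) (hr x)).nonneg
  have hχ1 : ∀ x y, |χ x y| ≤ 1 := fun x y => by
    rw [abs_of_nonneg (hχ0 x y)]; exact (bump x (r x) (hr x)).le_one
  have hχC : ∀ x y, y ∉ Metric.closedBall x (r x) → χ x y = 0 := fun x y hy => by
    apply (bump x (r x) (hr x)).zero_of_le_dist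
    rw [Metric.mem_closedBall, not_le] at hy
    exact hy.le
  have hχdisj : ∀ i ∈ F, ∀ j ∈ F, i ≠ j → ∀ y, χ i y * χ j y = 0 := by
    intro i hi j hj hij y
    by_cases hy : y ∈ Metric.closedBall i (r i)
    · rw [hχC j y (Set.disjoint_left.1 (hdisj i hi j hj hij) hy), mul_zero]
    · rw [hχC i y hy, zero_mul]
  have hballΩ : ∀ x ∈ F, Metric.closedBall x (r x) ⊆ Ω := fun x hx =>
    (Metric.closedBall_subset_closedBall (hF x hx).2).trans (hsub x (hF x hx).1)
  have hθ : ∀ x ∈ F, (p x).phase ≠ 0 := fun x hx => phase_ne_zero _ (hp x (hF x hx).1)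
  have hest : ∀ x ∈ F, ∃ B : ℝ, 0 ≤ B ∧ ∀ n : ℝ, 1 ≤ n → ∀ y i,
      |(p x).op (pot (χ x) (p x).phase n) y i -
        χ x y * Real.sin (n * (p x).phase y) * (p x).dir i| ≤ B * n⁻¹ := fun x hx =>
    op_pot_est (p x) (hp x (hF x hx).1) (hχs x) (isCompact_closedBall x (r x)) (hχC x)
  choose! B hB0 hB using hest
  set W := waveSum F p χ with hW
  have hWc : ∀ n i, Continuous (fun y => W n y i) := fun n i =>
    (continuous_apply i).comp (waveSum_smooth F p hχs n).continuous
  have hWlead : ∀ i n, 1 ≤ n → ∀ y, |W n y i -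
      lead F χ (fun x => (p x).phase) (fun x => (p x).dir i) n y| ≤ (∑ x ∈ F, B x) * n⁻¹ := by
    intro i n hn y
    rw [hW, waveSum, lead, Finset.sum_apply, ← Finset.sum_sub_distrib, Finset.sum_mul]
    exact (Finset.abs_sum_le_sum_abs _ _).trans
      (Finset.sum_le_sum fun x hx => hB x hx n hn y i)
  refine ⟨fun n y => z y + W n y,
    ∑ x ∈ F, ((p x).dir 3 ^ 2 + (p x).dir 4 ^ 2 + (p x).dir 0 ^ 2) / 2 * ∫ y in Ω, χ x y ^ 2,
    ?_, ?_, ?_, ?_⟩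
  · have hsmall : ∀ᶠ n : ℝ in atTop, ∀ x ∈ F, B x * n⁻¹ < δ x := by
      rw [Filter.eventually_all_finset]
      intro x hx
      have ht : Tendsto (fun n : ℝ => B x * n⁻¹) atTop (𝓝 0) := by
        simpa using tendsto_inv_atTop_zero.const_mul (B x)
      exact ht.eventually (gt_mem_nhds (hδ x (hF x hx).1))
    filter_upwards [hsmall, eventually_ge_atTop (1 : ℝ)] with n hn hn1
    have hoff : ∀ x y, y ∉ Metric.closedBall x (r x) →
        (p x).op (pot (χ x) (p x).phase n) y = 0 := fun x y hy =>
      op_pot_zero_off (p x) Metric.isClosed_closedBall (hχC x) n y hy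
    have hWoff : ∀ y, (∀ x ∈ F, y ∉ Metric.closedBall x (r x)) → W n y = 0 := fun y hy =>
      Finset.sum_eq_zero fun x hx => hoff x y (hy x hx)
    refine ⟨hzs.add (waveSum_smooth F p hχs n), ?_, ?_,
      LinSys.add hlin (waveSum_linSys F p hχs n) hzs (waveSum_smooth F p hχs n)⟩
    · have hcl : IsClosed (tsupport z ∪ ⋃ x ∈ F, Metric.closedBall x (r x)) :=
        (isClosed_tsupport z).union
          (F.finite_toSet.isClosed_biUnion fun x _ => Metric.isClosed_closedBall)
      refine (closure_minimal ?_ hcl).trans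
        (Set.union_subset hzsupp (Set.iUnion₂_subset hballΩ))
      intro y hy
      by_contra hcon
      simp only [Set.mem_union, Set.mem_iUnion, not_or, not_exists] at hcon
      exact hy (by simp [image_eq_zero_of_notMem_tsupport hcon.1, hWoff y hcon.2])
    · intro y
      by_cases hy : ∃ x ∈ F, y ∈ Metric.closedBall x (r x)
      · obtain ⟨x, hx, hyx⟩ := hy
        have hWx : W n y = (p x).op (pot (χ x) (p x).phase n) y :=
          Finset.sum_eq_single_of_mem x hx fun x' hx' hne =>
            hoff x' y (Set.disjoint_left.1 (hdisj x hx x' hx' hne.symm) hyx)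
        refine hseg x (hF x hx).1 y (Metric.closedBall_subset_closedBall (hF x hx).2 hyx)
          (χ x y * Real.sin (n * (p x).phase y)) ?_ _ ?_
        · rw [Set.mem_Icc, ← abs_le, abs_mul]
          exact mul_le_one₀ (hχ1 x y) (abs_nonneg _) (Real.abs_sin_le_one _)
        · rw [hWx, pi_norm_lt_iff (hδ x (hF x hx).1)]
          intro i
          exact (hB x hx n hn1 y i).trans_lt (hn x hx)
      · push Not at hy
        simpa [hWoff y hy] using hU y
  · have hgain : ∀ x ∈ F, (∫ y in Metric.closedBall x (r x), deficit z y ^ 2) / 2 ^ 17 ≤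
        ((p x).dir 3 ^ 2 + (p x).dir 4 ^ 2 + (p x).dir 0 ^ 2) / 2 * ∫ y in Ω, χ x y ^ 2 := by
      intro x hx
      have h1 : ∫ y in Metric.closedBall x (r x), deficit z y ^ 2 ≤
          ∫ y in Metric.closedBall x (r x), 4 * deficit z x ^ 2 := by
        refine setIntegral_mono_on (hdint.mono_set (hballΩ x hx))
          (integrableOn_const (isCompact_closedBall x (r x)).measure_lt_top.ne)
          Metric.isClosed_closedBall.measurableSet fun y hy => ?_
        have h2 := hdef x (hF x hx).1 y
          (Metric.closedBall_subset_closedBall (hF x hx).2 hy)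
        nlinarith [(hd y).1, (hd x).1]
      rw [setIntegral_const, smul_eq_mul] at h1
      have h3 := bump_sq_integral hfin x (r x) (hr x) (hballΩ x hx)
      have h4 := hen x (hF x hx).1
      have h5 := mul_le_mul (div_le_div_of_nonneg_right h4 zero_le_two) h3
        (by positivity) (by positivity)
      refine le_trans ?_ h5
      rw [div_le_iff₀ (by positivity)]
      refine h1.trans (le_of_eq ?_)
      ring
    have h6 := Finset.sum_le_sum hgain
    rw [← Finset.sum_div] at h6
    refine lt_of_lt_of_le ?_ h6
    rw [show (2 : ℝ) ^ 18 = 2 * 2 ^ 17 by norm_num, ← div_div]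
    exact div_lt_div_of_pos_right hcov (by positivity)
  · have hE := fun i => energy_lim (d := fun x => (p x).dir i) hΩ.measurableSet hfin hχc hχ1 hθ
      hχdisj (fun n => hWc n i) (hWlead i) (hzi i) (fun y => hM y i)
    have hsqint : ∀ i, IntegrableOn (fun y => z y i ^ 2) Ω := fun i =>
      integrableOn_of_bdd hfin ((hzi i).pow 2) (M := M ^ 2) fun y => by
        rw [abs_pow]; exact pow_le_pow_left₀ (abs_nonneg _) (hM y i) 2
    have hcomp : ∀ n i, IntegrableOn (fun y => (z y i + W n y i) ^ 2) Ω := fun n i =>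
      (((hzi i).add (hWc n i)).pow 2).locallyIntegrable.integrableOn_isCompact
        hb.isCompact_closure |>.mono_set subset_closure
    have hsum := ((hE 3).add (hE 4)).add (hE 0)
    refine (hsum.congr fun n => ?_).trans (le_of_eq ?_)
    · simp only [Pi.add_apply]
      exact (integral_add_three (hcomp n 3) (hcomp n 4) (hcomp n 0)).symm
    · congr 1
      rw [integral_add_three (hsqint 3) (hsqint 4) (hsqint 0)]
      have : ∑ x ∈ F, ((p x).dir 3 ^ 2 + (p x).dir 4 ^ 2 + (p x).dir 0 ^ 2) / 2 *
          ∫ y in Ω, χ x y ^ 2 = ∑ x ∈ F, (p x).dir 3 ^ 2 / 2 * (∫ y in Ω, χ x y ^ 2) +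
          ∑ x ∈ F, (p x).dir 4 ^ 2 / 2 * (∫ y in Ω, χ x y ^ 2) +
          ∑ x ∈ F, (p x).dir 0 ^ 2 / 2 * (∫ y in Ω, χ x y ^ 2) := by
        rw [← Finset.sum_add_distrib, ← Finset.sum_add_distrib]
        exact Finset.sum_congr rfl fun x _ => by ring
      rw [this]; ring
  · intro g hg
    have hgi : ∀ i, Integrable (fun y => g y i) := fun i => hg.eval i
    have hweak := fun i => weak_lim (d := fun x => (p x).dir i) hχc hχ1 hθ
      (fun n => hWc n i) (hWlead i) (hgi i)
    have hzg : ∀ i, Integrable (fun y => z y i * g y i) := fun i =>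
      (hgi i).bdd_mul (hzi i).aestronglyMeasurable (ae_of_all _ fun y => hM y i)
    have hWg : ∀ n i, Integrable (fun y => W n y i * g y i) := by
      intro n i
      have hcs : HasCompactSupport (fun y => W n y i) := by
        refine HasCompactSupport.intro
          (F.isCompact_biUnion fun x _ => isCompact_closedBall x (r x)) fun y hy => ?_
        simp only [Set.mem_iUnion, not_exists] at hy
        have : W n y = 0 := Finset.sum_eq_zero fun x hx =>
          op_pot_zero_off (p x) Metric.isClosed_closedBall (hχC x) n y (hy x hx)
        simp [this]
      obtain ⟨C, hC⟩ := hcs.exists_bound_of_continuous (hWc n i)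
      exact (hgi i).bdd_mul (hWc n i).aestronglyMeasurable (ae_of_all _ hC)
    have hlim : Tendsto (fun n => (∫ y, ∑ i, z y i * g y i) + ∑ i, ∫ y, W n y i * g y i) atTop
        (𝓝 ((∫ y, ∑ i, z y i * g y i) + ∑ _i : Fin 8, (0 : ℝ))) :=
      tendsto_const_nhds.add (tendsto_finsetSum _ fun i _ => hweak i)
    rw [Finset.sum_const_zero, add_zero] at hlim
    refine hlim.congr fun n => ?_
    rw [← integral_finsetSum _ fun i _ => hWg n i,
      ← integral_add (integrable_finsetSum _ fun i _ => hzg i)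
        (integrable_finsetSum _ fun i _ => hWg n i)]
    congr 1; funext y
    rw [← Finset.sum_add_distrib]
    exact Finset.sum_congr rfl fun i _ => by simp only [Pi.add_apply]; ring

/-- The key convex-integration lemma: there is `β > 0` such that every
`z₀ ∈ X₀` admits a sequence `z_k ∈ X₀` with
`‖v_k‖²_{L²(Ω)} + ‖b_k‖²_{L²(Ω)} ≥ ‖v₀‖² + ‖b₀‖² + β (2|Ω| − (‖v₀‖² + ‖b₀‖²))²`
for every `k`, and `z_k ⇀* z₀` in `L^∞`. -/
theorem stmt_15 (Ω : Set ((Fin 2 → ℝ) × ℝ)) (hΩopen : IsOpen Ω)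
    (hΩbdd : Bornology.IsBounded Ω) :
    ∃ β : ℝ, 0 < β ∧ ∀ z₀ ∈ X0 Ω, ∃ zs : ℕ → ((Fin 2 → ℝ) × ℝ) → Fin 8 → ℝ,
      (∀ k, zs k ∈ X0 Ω) ∧
      (∀ k, (∫ y in Ω, ((zs k y 3) ^ 2 + (zs k y 4) ^ 2 + (zs k y 0) ^ 2)) ≥
        (∫ y in Ω, ((z₀ y 3) ^ 2 + (z₀ y 4) ^ 2 + (z₀ y 0) ^ 2))
          + β * (2 * (volume Ω).toReal
              - ∫ y in Ω, ((z₀ y 3) ^ 2 + (z₀ y 4) ^ 2 + (z₀ y 0) ^ 2)) ^ 2) ∧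
      (∀ g : ((Fin 2 → ℝ) × ℝ) → Fin 8 → ℝ, Integrable g →
        Tendsto (fun k => ∫ y, ∑ i, zs k y i * g y i) atTop
          (𝓝 (∫ y, ∑ i, z₀ y i * g y i))) := by
  have hfin : volume Ω < ⊤ := hΩbdd.measure_lt_top
  have hfm : IsFiniteMeasure (volume.restrict Ω) := ⟨by simpa using hfin⟩
  have hV : 0 < volume.real Ω + 1 := by have : 0 ≤ volume.real Ω := measureReal_nonneg; linarith
  refine ⟨1 / (2 ^ 18 * (volume.real Ω + 1)), by positivity, fun z hz => ?_⟩
  have hzc : Continuous z := hz.1.continuous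
  have hd := deficit_mem hz.2.2.1
  have hdc := deficit_continuous hzc
  have hdint : IntegrableOn (deficit z) Ω :=
    integrableOn_of_bdd hfin hdc (M := 2) fun y => by
      rw [abs_of_pos (hd y).1]; exact (hd y).2
  have hd2int : IntegrableOn (fun y => deficit z y ^ 2) Ω :=
    integrableOn_of_bdd hfin (hdc.pow 2) (M := 4) fun y => by
      rw [abs_of_nonneg (sq_nonneg _)]; nlinarith [(hd y).1, (hd y).2]
  have hI : 2 * (volume Ω).toReal - ∫ y in Ω, ((z y 3) ^ 2 + (z y 4) ^ 2 + (z y 0) ^ 2) =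
      ∫ y in Ω, deficit z y := by
    have h1 : ∀ y, (z y 3) ^ 2 + (z y 4) ^ 2 + (z y 0) ^ 2 = 2 - deficit z y := fun y => by
      unfold deficit; ring
    simp only [h1]
    rw [integral_sub (integrable_const _) hdint, setIntegral_const, smul_eq_mul, Measure.real]
    ring
  rw [hI]
  have hcs := cauchy_integral hfin hdint hd2int
  have hβ : 1 / (2 ^ 18 * (volume.real Ω + 1)) * (∫ y in Ω, deficit z y) ^ 2 =
      (∫ y in Ω, deficit z y) ^ 2 / (volume.real Ω + 1) / 2 ^ 18 := by field_simp
  rw [hβ]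
  by_cases hpos : 0 < ∫ y in Ω, deficit z y ^ 2
  · obtain ⟨Z, G, hX, hG, hE, hw⟩ := exists_family hΩopen hΩbdd hz hpos
    have hEv := hX.and (hE.eventually (lt_mem_nhds (add_lt_add_right hG _)))
    obtain ⟨N, hN⟩ := eventually_atTop.1 hEv
    refine ⟨fun k => Z (N + k), fun k => (hN (N + k) (by simp)).1, fun k => ?_, fun g hg => ?_⟩
    · have h1 := (hN (N + k) (by simp)).2
      have h2 := div_le_div_of_nonneg_right hcs (by positivity : (0 : ℝ) ≤ 2 ^ 18)
      linarith
    · exact (hw g hg).comp (tendsto_atTop_add_const_left _ N tendsto_natCast_atTop_atTop)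
  · -- the deficit integrates to zero (`Ω` is null), so the constant sequence works
    refine ⟨fun _ => z, fun _ => hz, fun _ => ?_, fun g _ => tendsto_const_nhds⟩
    have h2 := div_le_div_of_nonneg_right (hcs.trans (not_lt.1 hpos))
      (by positivity : (0 : ℝ) ≤ 2 ^ 18)
    rw [zero_div] at h2
    linarith
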